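/- arXiv:2402.17886 — 3 statements merged into one kernel-verified Lean document; each statement's English description precedes it below -/
import Mathlib

section
/- (Proposition B.1, KL decay along the OU process.) For every t > 0, KL(p_t ‖ γ^d) ≤ (1/2) · (e^{−4t}/(1 − e^{−2t})) · d + (1/2) e^{−2t} m₂². -/
open MeasureTheory Real
open scoped ENNReal RealInnerProductSpace

noncomputable section

/-- `ℝ^d` as a Euclidean space. -/
abbrev Euc (d : ℕ) := EuclideanSpace ℝ (Fin d)

/-- The standard Gaussian measure `γ^d` on `ℝ^d`. -/
def stdGaussian (d : ℕ) : Measure (Euc d) :=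
  volume.withDensity fun x => ENNReal.ofReal ((2 * π) ^ (-(d : ℝ) / 2) * exp (-‖x‖ ^ 2 / 2))

/-- The unnormalized measure with density `exp (-V)` with respect to Lebesgue measure. -/
def gibbs (d : ℕ) (V : Euc d → ℝ) : Measure (Euc d) :=
  volume.withDensity fun x => ENNReal.ofReal (exp (-V x))

/-- The time-`t` marginal `p_t` of the OU process `dX_t = -X_t dt + √2 dB_t` started at `p`,
i.e. the law of `e^{-t} X_0 + √(1-e^{-2t}) Z` with `X_0 ∼ p`, `Z ∼ γ^d` independent. -/
def ouMarginal (d : ℕ) (p : Measure (Euc d)) (t : ℝ) : Measure (Euc d) :=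
  (p.prod (stdGaussian d)).map fun xz =>
    exp (-t) • xz.1 + Real.sqrt (1 - exp (-2 * t)) • xz.2

/-- The (smooth, positive) density of `p_t`. -/
def ouDensity (d : ℕ) (p : Measure (Euc d)) (t : ℝ) (x : Euc d) : ℝ :=
  (2 * π * (1 - exp (-2 * t))) ^ (-(d : ℝ) / 2) *
    ∫ z, exp (-‖x - exp (-t) • z‖ ^ 2 / (2 * (1 - exp (-2 * t)))) ∂p

/-- The score `∇ ln p_t`. -/
def score (d : ℕ) (p : Measure (Euc d)) (t : ℝ) (x : Euc d) : Euc d :=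
  gradient (fun y => Real.log (ouDensity d p t y)) x

/-- The conditional law `p_{0|t}(·|x)` of `X_0` given `X_t = x`, with density (w.r.t. `p`)
proportional to `z ↦ exp (-‖x - e^{-t} z‖² / (2 (1 - e^{-2t})))`. -/
def posterior (d : ℕ) (p : Measure (Euc d)) (t : ℝ) (x : Euc d) : Measure (Euc d) :=
  ((p.withDensity fun z =>
      ENNReal.ofReal (exp (-‖x - exp (-t) • z‖ ^ 2 / (2 * (1 - exp (-2 * t)))))) Set.univ)⁻¹ •
    (p.withDensity fun z =>
      ENNReal.ofReal (exp (-‖x - exp (-t) • z‖ ^ 2 / (2 * (1 - exp (-2 * t))))))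

/-- Kullback–Leibler divergence `KL(μ ‖ ν) = ∫ log (dμ/dν) dμ`. -/
def KLdiv {α : Type*} [MeasurableSpace α] (μ ν : Measure α) : ℝ :=
  ∫ x, Real.log ((μ.rnDeriv ν x).toReal) ∂μ

/-- Mean of the posterior `p_{0|t}(·|x)`. -/
def postMean (d : ℕ) (p : Measure (Euc d)) (t : ℝ) (x : Euc d) : Euc d :=
  ∫ z, z ∂(posterior d p t x)

/-- Trace of the covariance matrix of the posterior `p_{0|t}(·|x)`. -/
def postTrCov (d : ℕ) (p : Measure (Euc d)) (t : ℝ) (x : Euc d) : ℝ :=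
  ∫ z, ‖z - postMean d p t x‖ ^ 2 ∂(posterior d p t x)

/-- Likelihood ratio of `N(m, σ² I)` with respect to the standard Gaussian. -/
def gratio (d : ℕ) (σ : ℝ) (m y : Euc d) : ℝ :=
  (σ ^ d)⁻¹ * exp (‖y‖ ^ 2 / 2 - ‖σ⁻¹ • (y - m)‖ ^ 2 / 2)

lemma gratio_pos (d : ℕ) {σ : ℝ} (hσ : 0 < σ) (m y : Euc d) : 0 < gratio d σ m y := by
  unfold gratio; positivity

lemma measurable_gratio (d : ℕ) (σ a : ℝ) :
    Measurable (fun q : Euc d × Euc d => gratio d σ (a • q.1) q.2) := by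
  unfold gratio; fun_prop

lemma measurable_gratio_left (d : ℕ) (σ a : ℝ) (y : Euc d) :
    Measurable (fun x : Euc d => ENNReal.ofReal (gratio d σ (a • x) y)) := by
  unfold gratio; fun_prop

lemma measurable_gratio_right (d : ℕ) (σ : ℝ) (m : Euc d) :
    Measurable (fun y : Euc d => gratio d σ m y) := by
  unfold gratio; fun_prop

lemma measurable_gratio_comp (d : ℕ) (σ a : ℝ) :
    Measurable (fun q : Euc d × Euc d => gratio d σ (a • q.1) (a • q.1 + σ • q.2)) := by
  unfold gratio; fun_prop

lemma measurable_rho (d : ℕ) : Measurable (fun x : Euc d =>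
    ENNReal.ofReal ((2 * π) ^ (-(d : ℝ) / 2) * exp (-‖x‖ ^ 2 / 2))) := by
  fun_prop

lemma lintegral_shift (d : ℕ) {σ : ℝ} (hσ : 0 < σ) (m : Euc d) (g : Euc d → ℝ≥0∞)
    (hg : Measurable g) :
    ∫⁻ z, g (m + σ • z) ∂(stdGaussian d) =
      ∫⁻ y, ENNReal.ofReal (gratio d σ m y) * g y ∂(stdGaussian d) := by
  have hk : Measurable (fun y => gratio d σ m y) := by unfold gratio; fun_prop
  unfold stdGaussian
  rw [lintegral_withDensity_eq_lintegral_mul _ (measurable_rho d) (by fun_prop),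
    lintegral_withDensity_eq_lintegral_mul _ (measurable_rho d) (by fun_prop)]
  set ρ : Euc d → ℝ≥0∞ := fun x : Euc d =>
    ENNReal.ofReal ((2 * π) ^ (-(d : ℝ) / 2) * exp (-‖x‖ ^ 2 / 2)) with hρ
  have hρm : Measurable ρ := measurable_rho d
  let H : Euc d → ℝ≥0∞ := fun y => ρ (σ⁻¹ • (y - m)) * g y
  have hH : Measurable H := by
    have : Measurable (fun y : Euc d => σ⁻¹ • (y - m)) := by fun_prop
    exact (hρm.comp this).mul hg
  have h1 : ∫⁻ z, (ρ * fun z => g (m + σ • z)) z = ∫⁻ z, H (m + σ • z) := by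
    refine lintegral_congr fun z => ?_
    simp [H, hσ.ne']
  have h2 : ∫⁻ z, H (m + σ • z) = ∫⁻ w, H (m + w) ∂((volume : Measure (Euc d)).map (σ • ·)) := by
    rw [lintegral_map (by fun_prop) (by fun_prop)]
  rw [h1, h2, Measure.map_addHaar_smul _ hσ.ne', lintegral_smul_measure,
    lintegral_add_left_eq_self, smul_eq_mul, ← lintegral_const_mul _ hH]
  refine lintegral_congr fun y => ?_
  simp only [H, hρ, Pi.mul_apply, gratio, finrank_euclideanSpace, Fintype.card_fin]
  rw [← mul_assoc, ← mul_assoc, ← ENNReal.ofReal_mul (by positivity),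
    ← ENNReal.ofReal_mul (by positivity), abs_of_pos (by positivity)]
  congr 2
  have he : exp (-‖σ⁻¹ • (y - m)‖ ^ 2 / 2) =
      exp (-‖y‖ ^ 2 / 2) * exp (‖y‖ ^ 2 / 2 - ‖σ⁻¹ • (y - m)‖ ^ 2 / 2) := by
    rw [← exp_add]; congr 1; ring
  rw [he]; ring

lemma integral_rho (d : ℕ) :
    ∫ x : Euc d, (2 * π) ^ (-(d : ℝ) / 2) * exp (-‖x‖ ^ 2 / 2) = 1 := by
  have h := GaussianFourier.integral_rexp_neg_mul_sq_norm (V := Euc d) (b := 1 / 2) (by norm_num)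
  have : ∀ x : Euc d, -‖x‖ ^ 2 / 2 = -(1/2) * ‖x‖ ^ 2 := fun x => by ring
  simp_rw [this]
  rw [integral_const_mul, h, finrank_euclideanSpace, Fintype.card_fin,
    show π / (1/2) = 2 * π by ring, ← rpow_add (by positivity)]
  simp [neg_div]

lemma integral_rho_sq (d : ℕ) (hd : 1 ≤ d) :
    ∫ x : Euc d, (2 * π) ^ (-(d : ℝ) / 2) * exp (-‖x‖ ^ 2 / 2) * ‖x‖ ^ 2 = (d : ℝ) := by
  have : Nonempty (Fin d) := ⟨⟨0, hd⟩⟩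
  have hd' : (1 : ℝ) ≤ d := by exact_mod_cast hd
  have e1 := integral_fun_norm_addHaar (volume : Measure (Euc d))
    (fun r : ℝ => (2 * π) ^ (-(d : ℝ) / 2) * exp (-r ^ 2 / 2) * r ^ 2)
  have e0 := integral_fun_norm_addHaar (volume : Measure (Euc d))
    (fun r : ℝ => (2 * π) ^ (-(d : ℝ) / 2) * exp (-r ^ 2 / 2))
  rw [integral_rho] at e0
  have key : ∫ r in Set.Ioi (0 : ℝ), r ^ (d - 1) •
        ((2 * π) ^ (-(d : ℝ) / 2) * exp (-r ^ 2 / 2) * r ^ 2)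
      = d * ∫ r in Set.Ioi (0 : ℝ), r ^ (d - 1) •
        ((2 * π) ^ (-(d : ℝ) / 2) * exp (-r ^ 2 / 2)) := by
    have g1 := integral_rpow_mul_exp_neg_mul_rpow (p := 2) (q := d + 1) (b := 1 / 2)
      (by norm_num) (by linarith) (by norm_num)
    have g0 := integral_rpow_mul_exp_neg_mul_rpow (p := 2) (q := d - 1) (b := 1 / 2)
      (by norm_num) (by linarith) (by norm_num)
    have l1 : ∫ r in Set.Ioi (0 : ℝ), r ^ (d - 1) •
        ((2 * π) ^ (-(d : ℝ) / 2) * exp (-r ^ 2 / 2) * r ^ 2) =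
        (2 * π) ^ (-(d : ℝ) / 2) * ∫ r in Set.Ioi (0 : ℝ), r ^ ((d : ℝ) + 1) *
          exp (-(1 / 2) * r ^ (2 : ℝ)) := by
      rw [← integral_const_mul]
      refine setIntegral_congr_fun measurableSet_Ioi fun r hr => ?_
      obtain ⟨n, rfl⟩ : ∃ n, d = n + 1 := ⟨d - 1, by omega⟩
      have : r ^ (((n + 1 : ℕ) : ℝ) + 1) = r ^ (n + 2) := by
        rw [← rpow_natCast]; congr 1; push_cast; ring
      have h2 : -(1 / 2) * r ^ 2 = -r ^ 2 / 2 := by ring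
      simp only [this, rpow_two, h2, smul_eq_mul, Nat.add_sub_cancel]
      ring
    have l0 : ∫ r in Set.Ioi (0 : ℝ), r ^ (d - 1) •
        ((2 * π) ^ (-(d : ℝ) / 2) * exp (-r ^ 2 / 2)) =
        (2 * π) ^ (-(d : ℝ) / 2) * ∫ r in Set.Ioi (0 : ℝ), r ^ ((d : ℝ) - 1) *
          exp (-(1 / 2) * r ^ (2 : ℝ)) := by
      rw [← integral_const_mul]
      refine setIntegral_congr_fun measurableSet_Ioi fun r hr => ?_
      obtain ⟨n, rfl⟩ : ∃ n, d = n + 1 := ⟨d - 1, by omega⟩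
      have : r ^ (((n + 1 : ℕ) : ℝ) - 1) = r ^ n := by
        rw [← rpow_natCast]; congr 1; push_cast; ring
      have h2 : -(1 / 2) * r ^ 2 = -r ^ 2 / 2 := by ring
      simp only [this, rpow_two, h2, smul_eq_mul, Nat.add_sub_cancel]
      ring
    rw [l1, l0, g1, g0]
    have a1 : ((d : ℝ) + 1 + 1) / 2 = d / 2 + 1 := by ring
    have a0 : ((d : ℝ) - 1 + 1) / 2 = d / 2 := by ring
    have b1 : (1 / 2 : ℝ) ^ (-((d : ℝ) + 1 + 1) / 2) = (1 / 2) ^ (-((d : ℝ) - 1 + 1) / 2) * 2 := by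
      rw [show -((d : ℝ) + 1 + 1) / 2 = -((d : ℝ) - 1 + 1) / 2 + (-1) by ring,
        rpow_add (by norm_num)]
      norm_num [rpow_neg_one]
    rw [a1, a0, b1, Gamma_add_one (by positivity)]
    ring
  simp only [finrank_euclideanSpace, Fintype.card_fin] at e0 e1
  rw [e1, key]
  simp only [nsmul_eq_mul, smul_eq_mul] at e0 ⊢
  linear_combination (-(d : ℝ)) * e0

lemma integrable_rho (d : ℕ) :
    Integrable (fun x : Euc d => (2 * π) ^ (-(d : ℝ) / 2) * exp (-‖x‖ ^ 2 / 2)) :=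
  Integrable.of_integral_ne_zero (by rw [integral_rho]; norm_num)

lemma isProb_std (d : ℕ) : IsProbabilityMeasure (stdGaussian d) := by
  constructor
  unfold stdGaussian
  rw [withDensity_apply _ MeasurableSet.univ, Measure.restrict_univ,
    ← ofReal_integral_eq_lintegral_ofReal (integrable_rho d)
      (Filter.Eventually.of_forall fun x => by positivity), integral_rho]
  simp

lemma std_sq (d : ℕ) (hd : 1 ≤ d) : Integrable (fun x => ‖x‖ ^ 2) (stdGaussian d) ∧
    ∫ x, ‖x‖ ^ 2 ∂(stdGaussian d) = d := by
  have h : ∫ x, ‖x‖ ^ 2 ∂(stdGaussian d) = d := by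
    unfold stdGaussian
    rw [integral_withDensity_eq_integral_toReal_smul (measurable_rho d)
      (Filter.Eventually.of_forall fun x => ENNReal.ofReal_lt_top)]
    refine Eq.trans ?_ (integral_rho_sq d hd)
    refine integral_congr_ae (Filter.Eventually.of_forall fun x => ?_)
    simp only [smul_eq_mul]
    rw [ENNReal.toReal_ofReal (by positivity)]
  refine ⟨Integrable.of_integral_ne_zero ?_, h⟩
  rw [h]; positivity

lemma std_inner (d : ℕ) (x : Euc d) : ∫ z, ⟪x, z⟫ ∂(stdGaussian d) = 0 := by
  unfold stdGaussian
  rw [integral_withDensity_eq_integral_toReal_smul (measurable_rho d)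
      (Filter.Eventually.of_forall fun x => ENNReal.ofReal_lt_top)]
  have := integral_neg_eq_self (fun z : Euc d => (ENNReal.ofReal
    ((2 * π) ^ (-(d : ℝ) / 2) * exp (-‖z‖ ^ 2 / 2))).toReal • ⟪x, z⟫) volume
  simp only [norm_neg, inner_neg_right, smul_neg, integral_neg] at this
  linarith

/-- Density of `p_t` with respect to the standard Gaussian. -/
def fdens (d : ℕ) (p : Measure (Euc d)) (a σ : ℝ) (y : Euc d) : ℝ≥0∞ :=
  ∫⁻ x, ENNReal.ofReal (gratio d σ (a • x) y) ∂p

lemma measurable_fdens (d : ℕ) (p : Measure (Euc d)) [IsProbabilityMeasure p] (a σ : ℝ) :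
    Measurable (fdens d p a σ) := by
  unfold fdens
  exact Measurable.lintegral_prod_left' (f := fun q : Euc d × Euc d =>
    ENNReal.ofReal (gratio d σ (a • q.1) q.2)) (measurable_gratio d σ a).ennreal_ofReal

lemma lintegral_mix (d : ℕ) (p : Measure (Euc d)) [IsProbabilityMeasure p] {a σ : ℝ} (hσ : 0 < σ)
    (g : Euc d → ℝ≥0∞) (hg : Measurable g) :
    ∫⁻ q, g (a • q.1 + σ • q.2) ∂(p.prod (stdGaussian d)) =
      ∫⁻ y, fdens d p a σ y * g y ∂(stdGaussian d) := by
  have := isProb_std d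
  have hk := (measurable_gratio d σ a).ennreal_ofReal
  rw [lintegral_prod _ (by fun_prop)]
  simp_rw [lintegral_shift d hσ _ g hg]
  rw [lintegral_lintegral_swap (by fun_prop)]
  refine lintegral_congr fun y => ?_
  rw [lintegral_mul_const _ (measurable_gratio_left d σ a y)]
  rfl

lemma fdens_ne_zero (d : ℕ) (p : Measure (Euc d)) [IsProbabilityMeasure p] {a σ : ℝ} (hσ : 0 < σ)
    (y : Euc d) : fdens d p a σ y ≠ 0 := by
  have hk := (measurable_gratio d σ a).ennreal_ofReal
  unfold fdens
  intro h
  rw [lintegral_eq_zero_iff (measurable_gratio_left d σ a y)] at h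
  obtain ⟨x, hx⟩ := h.exists
  simp only [Pi.zero_apply, ENNReal.ofReal_eq_zero] at hx
  exact absurd (gratio_pos d hσ (a • x) y) (not_lt.mpr hx)

lemma fdens_ne_top (d : ℕ) (p : Measure (Euc d)) [IsProbabilityMeasure p] {a σ : ℝ} (hσ : 0 < σ)
    (y : Euc d) : fdens d p a σ y ≠ ⊤ := by
  unfold fdens
  refine ne_top_of_le_ne_top (b := ENNReal.ofReal ((σ ^ d)⁻¹ * exp (‖y‖ ^ 2 / 2)))
    ENNReal.ofReal_ne_top ?_
  calc _ ≤ ∫⁻ x, ENNReal.ofReal ((σ ^ d)⁻¹ * exp (‖y‖ ^ 2 / 2)) ∂p := by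
        refine lintegral_mono fun x => ENNReal.ofReal_le_ofReal ?_
        unfold gratio
        gcongr
        have : 0 ≤ ‖σ⁻¹ • (y - a • x)‖ ^ 2 / 2 := by positivity
        linarith
    _ = _ := by simp

lemma lintegral_fdens (d : ℕ) (p : Measure (Euc d)) [IsProbabilityMeasure p] {a σ : ℝ}
    (hσ : 0 < σ) : ∫⁻ y, fdens d p a σ y ∂(stdGaussian d) = 1 := by
  have := isProb_std d
  have h := lintegral_mix d p (a := a) hσ (fun _ => 1) measurable_const
  simpa using h.symm

lemma measurable_R (d : ℕ) (p : Measure (Euc d)) [IsProbabilityMeasure p] (a σ : ℝ) :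
    Measurable (fun q : Euc d × Euc d => (fdens d p a σ (a • q.1 + σ • q.2)).toReal /
      gratio d σ (a • q.1) (a • q.1 + σ • q.2)) := by
  have hT : Measurable (fun q : Euc d × Euc d => a • q.1 + σ • q.2) := by fun_prop
  exact ((measurable_fdens d p a σ).comp hT).ennreal_toReal.div (measurable_gratio_comp d σ a)

/-- The relative likelihood term integrates to one. -/
lemma lintegral_ratio (d : ℕ) (p : Measure (Euc d)) [IsProbabilityMeasure p] {a σ : ℝ}
    (hσ : 0 < σ) :
    ∫⁻ q, ENNReal.ofReal ((fdens d p a σ (a • q.1 + σ • q.2)).toReal /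
      gratio d σ (a • q.1) (a • q.1 + σ • q.2)) ∂(p.prod (stdGaussian d)) = 1 := by
  have := isProb_std d
  have hf := measurable_fdens d p a σ
  rw [lintegral_prod _ (measurable_R d p a σ).ennreal_ofReal.aemeasurable]
  have : ∀ x : Euc d, ∫⁻ z, ENNReal.ofReal ((fdens d p a σ (a • x + σ • z)).toReal /
      gratio d σ (a • x) (a • x + σ • z)) ∂(stdGaussian d) = 1 := by
    intro x
    rw [lintegral_shift d hσ (a • x)
      (fun y => ENNReal.ofReal ((fdens d p a σ y).toReal / gratio d σ (a • x) y))
        (hf.ennreal_toReal.div (measurable_gratio_right d σ (a • x))).ennreal_ofReal,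
      ← lintegral_fdens d p (a := a) hσ]
    refine lintegral_congr fun y => ?_
    have hp := gratio_pos d hσ (a • x) y
    rw [← ENNReal.ofReal_mul hp.le, mul_div_cancel₀ _ hp.ne',
      ENNReal.ofReal_toReal (fdens_ne_top d p hσ y)]
  simp [this]

lemma ou_eq (d : ℕ) (p : Measure (Euc d)) [IsProbabilityMeasure p] (t : ℝ) {σ : ℝ} (hσ : 0 < σ)
    (hs : Real.sqrt (1 - exp (-2 * t)) = σ) :
    ouMarginal d p t = (stdGaussian d).withDensity (fdens d p (exp (-t)) σ) := by
  refine Measure.ext_of_lintegral _ fun g hg => ?_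
  unfold ouMarginal
  rw [hs, lintegral_map hg (by fun_prop), lintegral_mix d p hσ g hg,
    lintegral_withDensity_eq_lintegral_mul _ (measurable_fdens d p _ _) hg]
  rfl

lemma kl_eq (d : ℕ) (p : Measure (Euc d)) [IsProbabilityMeasure p] (t : ℝ) {σ : ℝ} (hσ : 0 < σ)
    (hs : Real.sqrt (1 - exp (-2 * t)) = σ) :
    KLdiv (ouMarginal d p t) (stdGaussian d) =
      ∫ q, Real.log ((fdens d p (exp (-t)) σ (exp (-t) • q.1 + σ • q.2)).toReal)
        ∂(p.prod (stdGaussian d)) := by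
  have := isProb_std d
  have hf := measurable_fdens d p (exp (-t)) σ
  have h1 : (ouMarginal d p t).rnDeriv (stdGaussian d) =ᵐ[ouMarginal d p t]
      fdens d p (exp (-t)) σ := by
    rw [ou_eq d p t hσ hs]
    exact (withDensity_absolutelyContinuous _ _).ae_le (Measure.rnDeriv_withDensity _ hf)
  unfold KLdiv
  rw [integral_congr_ae (g := fun y => Real.log (fdens d p (exp (-t)) σ y).toReal)
    (h1.mono fun y hy => by simp only [hy])]
  unfold ouMarginal
  rw [hs, integral_map (by fun_prop)]
  exact (Measurable.log hf.ennreal_toReal).aestronglyMeasurable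

lemma log_gratio (d : ℕ) {σ : ℝ} (hσ : 0 < σ) (a : ℝ) (x z : Euc d) :
    Real.log (gratio d σ (a • x) (a • x + σ • z)) =
      -(d * Real.log σ) + (a ^ 2 / 2 * ‖x‖ ^ 2 + (σ ^ 2 - 1) / 2 * ‖z‖ ^ 2
        + a * σ * ⟪x, z⟫) := by
  unfold gratio
  rw [Real.log_mul (by positivity) (by positivity), Real.log_exp, Real.log_inv, Real.log_pow]
  have : σ⁻¹ • (a • x + σ • z - a • x) = z := by simp [hσ.ne']
  rw [this, norm_add_sq_real, norm_smul, norm_smul, mul_pow, mul_pow, inner_smul_left,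
    inner_smul_right]
  simp only [norm_eq_abs, sq_abs, conj_trivial]
  ring

lemma log_moments (d : ℕ) (hd : 1 ≤ d) (p : Measure (Euc d)) [IsProbabilityMeasure p]
    (hm2 : Integrable (fun x => ‖x‖ ^ 2) p) {σ : ℝ} (hσ : 0 < σ) (a : ℝ) :
    Integrable (fun q : Euc d × Euc d =>
      Real.log (gratio d σ (a • q.1) (a • q.1 + σ • q.2))) (p.prod (stdGaussian d)) ∧
    ∫ q, Real.log (gratio d σ (a • q.1) (a • q.1 + σ • q.2)) ∂(p.prod (stdGaussian d)) =
      -(d * Real.log σ) + (a ^ 2 / 2 * (∫ x, ‖x‖ ^ 2 ∂p) + (σ ^ 2 - 1) / 2 * d) := by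
  have := isProb_std d
  obtain ⟨hz, hz'⟩ := std_sq d hd
  have i1 : Integrable (fun q : Euc d × Euc d => ‖q.1‖ ^ 2) (p.prod (stdGaussian d)) :=
    hm2.comp_fst _
  have i2 : Integrable (fun q : Euc d × Euc d => ‖q.2‖ ^ 2) (p.prod (stdGaussian d)) :=
    hz.comp_snd _
  have i3 : Integrable (fun q : Euc d × Euc d => ⟪q.1, q.2⟫) (p.prod (stdGaussian d)) := by
    refine (i1.add i2).mono' (by fun_prop) (Filter.Eventually.of_forall fun q => ?_)
    refine (norm_inner_le_norm q.1 q.2).trans ?_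
    simp only [Pi.add_apply]
    nlinarith [sq_nonneg (‖q.1‖ - ‖q.2‖), sq_nonneg (‖q.1‖ + ‖q.2‖)]
  have e1 : ∫ q : Euc d × Euc d, ‖q.1‖ ^ 2 ∂(p.prod (stdGaussian d)) = ∫ x, ‖x‖ ^ 2 ∂p := by
    rw [integral_fun_fst (fun x : Euc d => ‖x‖ ^ 2)]; simp
  have e2 : ∫ q : Euc d × Euc d, ‖q.2‖ ^ 2 ∂(p.prod (stdGaussian d)) = d := by
    rw [integral_fun_snd (fun x : Euc d => ‖x‖ ^ 2), hz']; simp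
  have e3 : ∫ q : Euc d × Euc d, ⟪q.1, q.2⟫ ∂(p.prod (stdGaussian d)) = 0 := by
    rw [integral_prod _ i3]; simp [std_inner]
  simp_rw [log_gratio d hσ]
  have j1 := i1.const_mul (a ^ 2 / 2)
  have j2 := i2.const_mul ((σ ^ 2 - 1) / 2)
  have j3 := i3.const_mul (a * σ)
  refine ⟨(integrable_const _).add ((j1.add j2).add j3), ?_⟩
  have j12 : Integrable (fun q : Euc d × Euc d => a ^ 2 / 2 * ‖q.1‖ ^ 2 +
    (σ ^ 2 - 1) / 2 * ‖q.2‖ ^ 2) (p.prod (stdGaussian d)) := j1.add j2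
  have j123 : Integrable (fun q : Euc d × Euc d => a ^ 2 / 2 * ‖q.1‖ ^ 2 +
    (σ ^ 2 - 1) / 2 * ‖q.2‖ ^ 2 + a * σ * ⟪q.1, q.2⟫) (p.prod (stdGaussian d)) := j12.add j3
  rw [integral_add (integrable_const _) j123, integral_add j12 j3,
    integral_add j1 j2, integral_const_mul, integral_const_mul, integral_const_mul, e1, e2, e3]
  simp

/-- **Proposition B.1 (KL decay along the OU process).**
For every `t > 0`, `KL(p_t ‖ γ^d) ≤ (1/2) (e^{-4t}/(1 - e^{-2t})) d + (1/2) e^{-2t} m₂²`. -/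
theorem kl_decay_along_OU
    (d : ℕ) (hd : 1 ≤ d) (V : Euc d → ℝ) (hV : Measurable V)
    (p : Measure (Euc d)) (hprob : IsProbabilityMeasure p)
    (hp : p = ((gibbs d V) Set.univ)⁻¹ • gibbs d V)
    (hm2 : Integrable (fun x => ‖x‖ ^ 2) p)
    (t : ℝ) (ht : 0 < t) :
    KLdiv (ouMarginal d p t) (stdGaussian d) ≤
      1 / 2 * (exp (-4 * t) / (1 - exp (-2 * t))) * d +
        1 / 2 * exp (-2 * t) * (∫ x, ‖x‖ ^ 2 ∂p) := by
  have hE : exp (-2 * t) < 1 := by rw [exp_lt_one_iff]; linarith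
  have hE0 : 0 < exp (-2 * t) := exp_pos _
  have hs0 : 0 < 1 - exp (-2 * t) := by linarith
  set σ := Real.sqrt (1 - exp (-2 * t)) with hs
  have hσ : 0 < σ := Real.sqrt_pos.mpr hs0
  have hσ2 : σ ^ 2 = 1 - exp (-2 * t) := Real.sq_sqrt hs0.le
  have ha2 : exp (-t) ^ 2 = exp (-2 * t) := by
    rw [← exp_nat_mul]; congr 1; push_cast; ring
  have ha4 : exp (-4 * t) = exp (-2 * t) ^ 2 := by
    rw [← exp_nat_mul]; congr 1; push_cast; ring
  have hm0 : 0 ≤ ∫ x, ‖x‖ ^ 2 ∂p := integral_nonneg fun x => by positivity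
  have := isProb_std d
  rw [kl_eq d p t hσ hs.symm]
  by_cases hlogF : Integrable (fun q : Euc d × Euc d =>
      Real.log ((fdens d p (exp (-t)) σ (exp (-t) • q.1 + σ • q.2)).toReal))
      (p.prod (stdGaussian d))
  swap
  · rw [integral_undef hlogF]
    have : 0 ≤ exp (-4 * t) / (1 - exp (-2 * t)) := div_nonneg (exp_pos _).le hs0.le
    positivity
  obtain ⟨hL, hLe⟩ := log_moments d hd p hm2 hσ (exp (-t))
  have hR := lintegral_ratio d p (a := exp (-t)) hσ
  set R : Euc d × Euc d → ℝ := fun q => (fdens d p (exp (-t)) σ (exp (-t) • q.1 + σ • q.2)).toReal /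
      gratio d σ (exp (-t) • q.1) (exp (-t) • q.1 + σ • q.2) with hRdef
  have hRm : Measurable R := measurable_R d p (exp (-t)) σ
  have hR0 : ∀ q, 0 ≤ R q := fun q =>
    div_nonneg ENNReal.toReal_nonneg (gratio_pos d hσ _ _).le
  have hRe : ∫ q, R q ∂(p.prod (stdGaussian d)) = 1 := by
    rw [integral_eq_lintegral_of_nonneg_ae (Filter.Eventually.of_forall hR0)
      hRm.aestronglyMeasurable, hR]
    simp
  have hRi : Integrable R (p.prod (stdGaussian d)) :=
    Integrable.of_integral_ne_zero (by rw [hRe]; norm_num)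
  have hmain : ∫ q, Real.log ((fdens d p (exp (-t)) σ (exp (-t) • q.1 + σ • q.2)).toReal)
        ∂(p.prod (stdGaussian d)) ≤
      ∫ q, (Real.log (gratio d σ (exp (-t) • q.1) (exp (-t) • q.1 + σ • q.2)) + (R q - 1))
        ∂(p.prod (stdGaussian d)) := by
    refine integral_mono hlogF (hL.add (hRi.sub (integrable_const _))) fun q => ?_
    have hF : 0 < (fdens d p (exp (-t)) σ (exp (-t) • q.1 + σ • q.2)).toReal :=
      ENNReal.toReal_pos (fdens_ne_zero d p hσ _) (fdens_ne_top d p hσ _)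
    have hG := gratio_pos d hσ (exp (-t) • q.1) (exp (-t) • q.1 + σ • q.2)
    have := Real.log_le_sub_one_of_pos (div_pos hF hG)
    rw [Real.log_div hF.ne' hG.ne'] at this
    simp only [hRdef]
    linarith
  have hR1 : Integrable (fun q => R q - 1) (p.prod (stdGaussian d)) :=
    hRi.sub (integrable_const _)
  rw [integral_add hL hR1, integral_sub hRi (integrable_const _), hRe,
    hLe] at hmain
  simp only [integral_const, probReal_univ, smul_eq_mul, mul_one, sub_self, add_zero] at hmain
  refine hmain.trans ?_
  have hlog : 2 * Real.log σ = Real.log (1 - exp (-2 * t)) := by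
    rw [← hσ2, Real.log_pow]; push_cast; ring
  have hlog2 := Real.one_sub_inv_le_log_of_pos hs0
  rw [ha2, hσ2, ha4]
  have key : -(2 * Real.log σ) - exp (-2 * t) ≤ exp (-2 * t) ^ 2 / (1 - exp (-2 * t)) := by
    rw [hlog]
    have : exp (-2 * t) ^ 2 / (1 - exp (-2 * t)) = (1 - exp (-2 * t))⁻¹ - 1 - exp (-2 * t) := by
      have hne := hs0.ne'
      generalize exp (-2 * t) = s at hne ⊢
      rw [div_eq_iff hne]
      have hi : (1 - s)⁻¹ * (1 - s) = 1 := inv_mul_cancel₀ hne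
      linear_combination -hi
    linarith
  have hd0 : (0 : ℝ) ≤ d := by positivity
  have := mul_le_mul_of_nonneg_right key hd0
  linarith
end
end

section
/- (Proposition B.2, stochastic-localization dynamics of the posterior covariance.) Assume p has finite second moment. The matrix-valued map t ↦ E_{x ∼ p_t}[Σ_t(x)] is differentiable on (0, ∞) and satisfies, for all t > 0, (d/dt) E_{x ∼ p_t}[Σ_t(x)] = (2 e^{−2t}/(1 − e^{−2t})²) E_{x ∼ p_t}[Σ_t(x)²]. -/
open MeasureTheory Real
open scoped ENNReal RealInnerProductSpace

noncomputable section

/-- The covariance matrix `Σ_t(x)` of the posterior `p_{0|t}(·|x)`. -/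
def postCov (d : ℕ) (p : Measure (Euc d)) (t : ℝ) (x : Euc d) : Matrix (Fin d) (Fin d) ℝ :=
  Matrix.of fun i j =>
    ∫ z, (z i - postMean d p t x i) * (z j - postMean d p t x j) ∂(posterior d p t x)

namespace PCD

/-- Heat kernel of variance `τ`. -/
def kern (d : ℕ) (τ : ℝ) (w : Euc d) : ℝ :=
  (2 * π * τ) ^ (-(d : ℝ) / 2) * exp (-‖w‖ ^ 2 / (2 * τ))

/-- polynomial weight -/
def qf (d : ℕ) (w : Euc d) : ℝ := 2 * (1 + ‖w‖ ^ 2) ^ 2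

/-- unnormalised moments of the noise -/
def A (d : ℕ) (p : Measure (Euc d)) (τ : ℝ) (f : Euc d → ℝ) (y : Euc d) : ℝ :=
  ∫ x, f (y - x) * kern d τ (y - x) ∂p

structure Good4 {d : ℕ} (f : Euc d → ℝ) : Prop where
  cont : Continuous f
  bd : ∀ w, |f w| ≤ qf d w ^ 4

structure Good {d : ℕ} (f : Euc d → ℝ) : Prop where
  cont : Continuous f
  bd : ∀ w, |f w| ≤ qf d w

lemma two_le_qf {d : ℕ} (w : Euc d) : 2 ≤ qf d w := by
  unfold qf
  nlinarith [sq_nonneg ‖w‖, sq_nonneg (‖w‖^2)]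

lemma qf_cont {d : ℕ} : Continuous (qf d) := by unfold qf; fun_prop

lemma Good.good4 {d : ℕ} {f : Euc d → ℝ} (h : Good f) : Good4 f :=
  ⟨h.cont, fun w => (h.bd w).trans (by
    have := two_le_qf w
    exact le_self_pow₀ (by linarith) (by norm_num))⟩

lemma kern_cont (d : ℕ) (τ : ℝ) : Continuous (kern d τ) := by
  unfold kern; fun_prop

lemma kern_pos (d : ℕ) {τ : ℝ} (hτ : 0 < τ) (w : Euc d) : 0 < kern d τ w := by
  unfold kern; positivity

lemma poly_exp {b : ℝ} (hb : 0 < b) : ∃ K : ℝ, 0 < K ∧ ∀ r : ℝ, 0 ≤ r →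
    (1 + r) ^ 8 * exp (-(b * r)) ≤ K := by
  refine ⟨(Nat.factorial 8 : ℝ) / b ^ 8 * exp b, by positivity, fun r hr => ?_⟩
  have h := Real.pow_div_factorial_le_exp (b * (1 + r)) (by positivity) 8
  rw [div_le_iff₀ (by positivity), mul_pow, mul_add, mul_one, exp_add] at h
  rw [exp_neg, ← div_eq_mul_inv, div_le_iff₀ (exp_pos _), div_mul_eq_mul_div, div_mul_eq_mul_div,
    le_div_iff₀ (by positivity)]
  linarith

lemma kern_bound (d : ℕ) {τ₀ : ℝ} (h0 : 0 < τ₀) : ∃ K : ℝ, 0 < K ∧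
    ∀ τ ∈ Set.Icc (τ₀ / 2) (2 * τ₀), ∀ w : Euc d,
      qf d w ^ 4 * kern d τ w ≤ K * exp (-(1 / (8 * τ₀)) * ‖w‖ ^ 2) := by
  obtain ⟨K, hK, h⟩ := poly_exp (b := 1 / (8 * τ₀)) (by positivity)
  refine ⟨16 * K * (2 * π * (τ₀ / 2)) ^ (-(d : ℝ) / 2), by positivity, fun τ hτ w => ?_⟩
  obtain ⟨h1, h2⟩ := hτ
  have hτ0 : 0 < τ := by linarith
  have hc : (2 * π * τ) ^ (-(d : ℝ) / 2) ≤ (2 * π * (τ₀ / 2)) ^ (-(d : ℝ) / 2) := by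
    apply Real.rpow_le_rpow_of_nonpos (by positivity)
    · gcongr
    · have : (0:ℝ) ≤ d := by positivity
      linarith
  have he : exp (-‖w‖ ^ 2 / (2 * τ)) ≤
      exp (-(1 / (8 * τ₀) * ‖w‖ ^ 2)) * exp (-(1 / (8 * τ₀)) * ‖w‖ ^ 2) := by
    rw [← exp_add]
    apply exp_le_exp.2
    have : ‖w‖ ^ 2 / (2 * (2 * τ₀)) ≤ ‖w‖ ^ 2 / (2 * τ) := by gcongr
    have e : ‖w‖ ^ 2 / (2 * (2 * τ₀)) = 1 / (8 * τ₀) * ‖w‖ ^ 2 + 1 / (8 * τ₀) * ‖w‖ ^ 2 := by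
      field_simp; ring
    rw [neg_div]; linarith
  have hh := h (‖w‖ ^ 2) (by positivity)
  unfold kern qf
  calc (2 * (1 + ‖w‖ ^ 2) ^ 2) ^ 4 * ((2 * π * τ) ^ (-(d : ℝ) / 2) * exp (-‖w‖ ^ 2 / (2 * τ)))
      ≤ (2 * (1 + ‖w‖ ^ 2) ^ 2) ^ 4 * ((2 * π * (τ₀ / 2)) ^ (-(d : ℝ) / 2) *
        (exp (-(1 / (8 * τ₀) * ‖w‖ ^ 2)) * exp (-(1 / (8 * τ₀)) * ‖w‖ ^ 2))) := by gcongr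
    _ = 16 * ((1 + ‖w‖ ^ 2) ^ 8 * exp (-(1 / (8 * τ₀) * ‖w‖ ^ 2))) *
        (2 * π * (τ₀ / 2)) ^ (-(d : ℝ) / 2) * exp (-(1 / (8 * τ₀)) * ‖w‖ ^ 2) := by ring
    _ ≤ _ := by gcongr

lemma mem_self {τ : ℝ} (h : 0 < τ) : τ ∈ Set.Icc (τ / 2) (2 * τ) := ⟨by linarith, by linarith⟩

/-- uniform bound -/
lemma kern_bound' (d : ℕ) {τ₀ : ℝ} (h0 : 0 < τ₀) : ∃ K : ℝ, 0 < K ∧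
    ∀ τ ∈ Set.Icc (τ₀ / 2) (2 * τ₀), ∀ w : Euc d, qf d w ^ 4 * kern d τ w ≤ K := by
  obtain ⟨K, hK, h⟩ := kern_bound d h0
  refine ⟨K, hK, fun τ hτ w => (h τ hτ w).trans ?_⟩
  have : exp (-(1 / (8 * τ₀)) * ‖w‖ ^ 2) ≤ 1 := by
    apply exp_le_one_iff.2
    have : 0 ≤ 1 / (8 * τ₀) * ‖w‖ ^ 2 := by positivity
    linarith
  nlinarith

section
variable {d : ℕ} {p : Measure (Euc d)} [IsProbabilityMeasure p]

lemma Good4.bd_kern {f : Euc d → ℝ} (hf : Good4 f) {τ : ℝ} (hτ : 0 < τ) (w : Euc d) :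
    |f w * kern d τ w| ≤ qf d w ^ 4 * kern d τ w := by
  rw [abs_mul, abs_of_pos (kern_pos d hτ w)]
  exact mul_le_mul_of_nonneg_right (hf.bd w) (kern_pos d hτ w).le

lemma Good4.int {f : Euc d → ℝ} (hf : Good4 f) {τ : ℝ} (hτ : 0 < τ) (y : Euc d) :
    Integrable (fun x => f (y - x) * kern d τ (y - x)) p := by
  obtain ⟨K, hK, h⟩ := kern_bound' d hτ
  have hc := hf.cont
  have hk := kern_cont d τ
  refine Integrable.of_bound (C := K) (Continuous.aestronglyMeasurable (by fun_prop)) ?_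
  refine Filter.Eventually.of_forall fun x => ?_
  rw [norm_eq_abs]
  exact (hf.bd_kern hτ _).trans (h τ (mem_self hτ) _)

lemma good_one : Good (fun _ : Euc d => (1:ℝ)) :=
  ⟨by fun_prop, fun w => by have := two_le_qf w; rw [abs_one]; linarith⟩

lemma abs_coord (w : Euc d) (i : Fin d) : |w i| ≤ ‖w‖ := by
  simpa using PiLp.norm_apply_le w i

lemma good_x (i : Fin d) : Good (fun w : Euc d => w i) :=
  ⟨by fun_prop, fun w => (abs_coord w i).trans (by
    unfold qf; nlinarith [sq_nonneg (‖w‖ - 1), sq_nonneg (‖w‖^2)])⟩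

lemma good_xx (i k : Fin d) : Good (fun w : Euc d => w i * w k) :=
  ⟨by fun_prop, fun w => by
    rw [abs_mul]
    have : |w i| * |w k| ≤ ‖w‖ * ‖w‖ := by gcongr <;> exact abs_coord _ _
    refine this.trans ?_
    unfold qf; nlinarith [sq_nonneg (‖w‖ - 1), sq_nonneg (‖w‖^2)]⟩

lemma good_cube (r : ℝ) (hr : 0 ≤ r) : r * r ^ 2 ≤ 2 * (1 + r ^ 2) ^ 2 := by
  nlinarith [sq_nonneg (r - 1), sq_nonneg (r ^ 2), mul_nonneg hr hr, mul_nonneg (mul_nonneg hr hr) (sq_nonneg (r-1))]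

lemma good_xxx (i k : Fin d) : Good (fun w : Euc d => w i * w k * w k) :=
  ⟨by fun_prop, fun w => by
    rw [abs_mul, abs_mul]
    have : |w i| * |w k| * |w k| ≤ ‖w‖ * ‖w‖ * ‖w‖:= by gcongr <;> exact abs_coord _ _
    refine this.trans ?_
    have := good_cube ‖w‖ (norm_nonneg _)
    unfold qf; linarith⟩

lemma good_xn (i : Fin d) : Good (fun w : Euc d => w i * ‖w‖ ^ 2) :=
  ⟨by fun_prop, fun w => by
    rw [abs_mul, abs_of_nonneg (sq_nonneg ‖w‖)]
    have : |w i| * ‖w‖ ^ 2 ≤ ‖w‖ * ‖w‖ ^ 2 := by gcongr; exact abs_coord _ _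
    exact this.trans (good_cube ‖w‖ (norm_nonneg _))⟩

lemma good_n : Good (fun w : Euc d => 1 * ‖w‖ ^ 2) :=
  ⟨by fun_prop, fun w => by
    rw [one_mul, abs_of_nonneg (sq_nonneg ‖w‖)]
    unfold qf; nlinarith [sq_nonneg (‖w‖ - 1), sq_nonneg (‖w‖^2)]⟩

lemma good_dxx (δ : ℝ) (hδ : δ = 0 ∨ δ = 1) (i k : Fin d) :
    Good (fun w : Euc d => δ * w k + w i) :=
  ⟨by fun_prop, fun w => by
    have h1 := abs_coord w i
    have h2 := abs_coord w k
    have h3 : |δ * w k + w i| ≤ 2 * ‖w‖ := by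
      rcases hδ with rfl | rfl
      · simp only [zero_mul, zero_add]; linarith [norm_nonneg w]
      · rw [one_mul]; exact (abs_add_le _ _).trans (by linarith)
    unfold qf; nlinarith [sq_nonneg (‖w‖ - 1), sq_nonneg (‖w‖^2)]⟩

lemma good_const (δ : ℝ) (hδ : δ = 0 ∨ δ = 1) : Good (fun _ : Euc d => δ) :=
  ⟨by fun_prop, fun w => by
    have := two_le_qf w
    rcases hδ with rfl | rfl
    · simp; linarith
    · simp; linarith⟩

lemma good4_q : Good4 (qf d) := ⟨qf_cont, fun w => by
    have := two_le_qf w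
    rw [abs_of_nonneg (by linarith)]
    exact le_self_pow₀ (by linarith) (by norm_num)⟩

lemma good4_q2 : Good4 (fun w => qf d w ^ 2) := ⟨qf_cont.pow 2, fun w => by
    have := two_le_qf w
    rw [abs_of_nonneg (by positivity)]
    exact pow_le_pow_right₀ (by linarith) (by norm_num)⟩

lemma good4_q4 : Good4 (fun w => qf d w ^ 4) := ⟨qf_cont.pow 4, fun w => by
    rw [abs_of_nonneg (by positivity)]⟩

lemma N_pos {τ : ℝ} (hτ : 0 < τ) (y : Euc d) : 0 < A d p τ (fun _ => 1) y := by
  unfold A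
  rw [integral_pos_iff_support_of_nonneg]
  · have : Function.support (fun x => 1 * kern d τ (y - x)) = Set.univ := by
      ext x; simp [(kern_pos d hτ (y - x)).ne']
    rw [this]; simp
  · intro x; simpa using (kern_pos d hτ (y - x)).le
  · exact good_one.good4.int hτ y

lemma A_cs {g : Euc d → ℝ} (hg : Good4 g) (hg2 : Good4 (fun w => g w ^ 2)) {τ : ℝ} (hτ : 0 < τ)
    (y : Euc d) :
    A d p τ g y ^ 2 ≤ A d p τ (fun _ => 1) y * A d p τ (fun w => g w ^ 2) y := by
  set N := A d p τ (fun _ => 1) y with hN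
  have hNpos : 0 < N := N_pos hτ y
  set l := A d p τ g y / N with hl
  have h0 : 0 ≤ ∫ x, (g (y - x) - l) ^ 2 * kern d τ (y - x) ∂p :=
    integral_nonneg fun x => mul_nonneg (sq_nonneg _) (kern_pos d hτ _).le
  have e : ∫ x, (g (y - x) - l) ^ 2 * kern d τ (y - x) ∂p =
      A d p τ (fun w => g w ^ 2) y - 2 * l * A d p τ g y + l ^ 2 * N := by
    have i1 : Integrable (fun x => g (y - x) ^ 2 * kern d τ (y - x) -
        2 * l * (g (y - x) * kern d τ (y - x))) p :=
      (hg2.int hτ y).sub ((hg.int hτ y).const_mul _)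
    have i2 : Integrable (fun x => l ^ 2 * (1 * kern d τ (y - x))) p :=
      (good_one.good4.int hτ y).const_mul _
    rw [hN]; unfold A
    rw [← integral_const_mul, ← integral_const_mul, ← integral_sub (hg2.int hτ y)
      ((hg.int hτ y).const_mul _), ← integral_add i1 i2]
    congr 1; ext x; ring
  rw [e] at h0
  have e2 : A d p τ g y = l * N := by rw [hl]; field_simp
  rw [e2] at h0 ⊢
  nlinarith

/-- Normalised bracket. -/
def br (d : ℕ) (p : Measure (Euc d)) (τ : ℝ) (f : Euc d → ℝ) (y : Euc d) : ℝ :=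
  A d p τ f y / A d p τ (fun _ => 1) y

lemma A_eq_br {τ : ℝ} (hτ : 0 < τ) (f : Euc d → ℝ) (y : Euc d) :
    A d p τ f y = A d p τ (fun _ => 1) y * br d p τ f y := by
  have := N_pos (p := p) hτ y
  unfold br; field_simp

lemma br_one {τ : ℝ} (hτ : 0 < τ) (y : Euc d) : br d p τ (fun _ => 1) y = 1 :=
  div_self (N_pos hτ y).ne'

lemma A_abs {f : Euc d → ℝ} (hf : Good f) {τ : ℝ} (hτ : 0 < τ) (y : Euc d) :
    |A d p τ f y| ≤ A d p τ (qf d) y := by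
  unfold A
  refine (abs_integral_le_integral_abs).trans ?_
  refine integral_mono (hf.good4.int hτ y).abs (good4_q.int hτ y) fun x => ?_
  simp only [abs_mul, abs_of_pos (kern_pos d hτ _)]
  exact mul_le_mul_of_nonneg_right (hf.bd _) (kern_pos d hτ _).le

lemma br_abs {f : Euc d → ℝ} (hf : Good f) {τ : ℝ} (hτ : 0 < τ) (y : Euc d) :
    |br d p τ f y| ≤ br d p τ (qf d) y := by
  unfold br
  rw [abs_div, abs_of_pos (N_pos hτ y)]
  exact div_le_div_of_nonneg_right (A_abs hf hτ y) (N_pos hτ y).le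

lemma one_le_Q {τ : ℝ} (hτ : 0 < τ) (y : Euc d) : 1 ≤ br d p τ (qf d) y := by
  have := br_abs (p := p) good_one hτ y
  rwa [br_one hτ, abs_one] at this

lemma NQ4 {τ : ℝ} (hτ : 0 < τ) (y : Euc d) :
    A d p τ (fun _ => 1) y * br d p τ (qf d) y ^ 4 ≤ A d p τ (fun w => qf d w ^ 4) y := by
  have hN := N_pos (p := p) hτ y
  have h1 := A_cs (p := p) good4_q good4_q2 hτ y
  have h2 := A_cs (p := p) good4_q2 (by simpa [← pow_mul] using good4_q4 (d := d)) hτ y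
  simp only [← pow_mul] at h2
  norm_num at h2
  set N := A d p τ (fun _ => 1) y
  set a := A d p τ (qf d) y with ha
  set b := A d p τ (fun w => qf d w ^ 2) y
  set c := A d p τ (fun w => qf d w ^ 4) y
  have h3 : (a ^ 2) ^ 2 ≤ (N * b) ^ 2 := pow_le_pow_left₀ (by positivity) h1 2
  unfold br
  rw [← ha, div_pow]
  have : N * (a ^ 4 / N ^ 4) = a ^ 4 / N ^ 3 := by field_simp
  rw [show A d p τ (fun _ => 1) y = N from rfl, this, div_le_iff₀ (by positivity)]
  nlinarith [mul_le_mul_of_nonneg_left h2 (sq_nonneg N)]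

/-- integrable envelope -/
def env (d : ℕ) (p : Measure (Euc d)) (τ₀ : ℝ) (y : Euc d) : ℝ :=
  ∫ x, exp (-(1 / (8 * τ₀)) * ‖y - x‖ ^ 2) ∂p

lemma gauss_int {b : ℝ} (hb : 0 < b) : Integrable (fun w : Euc d => exp (-b * ‖w‖ ^ 2)) := by
  have := GaussianFourier.integrable_cexp_neg_mul_sq_norm_add (b := (b:ℂ)) (V := Euc d)
    (by simpa using hb) 0 0
  have h2 := this.norm
  refine h2.congr (Filter.Eventually.of_forall fun w => ?_)
  simp only [zero_mul, add_zero]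
  rw [Complex.norm_exp]
  congr 1
  rw [← Complex.ofReal_pow, ← Complex.ofReal_neg, ← Complex.ofReal_mul, Complex.ofReal_re]

lemma conv_int {g : Euc d → ℝ} (hg : Integrable g) :
    Integrable (fun z : Euc d × Euc d => g (z.1 - z.2)) (volume.prod p) := by
  have := Integrable.convolution_integrand (ContinuousLinearMap.mul ℝ ℝ) (f := fun _ : Euc d => (1:ℝ))
    (g := g) (ν := p) (μ := volume) (integrable_const _) hg
  simpa using this

lemma env_int {τ₀ : ℝ} (h0 : 0 < τ₀) : Integrable (env d p τ₀) :=
  (conv_int (p := p) (gauss_int (d := d) (b := 1 / (8 * τ₀)) (by positivity))).integral_prod_left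

lemma A4_env {τ₀ : ℝ} (h0 : 0 < τ₀) : ∃ K : ℝ, 0 < K ∧
    ∀ τ ∈ Set.Icc (τ₀ / 2) (2 * τ₀), ∀ y : Euc d,
      A d p τ (fun w => qf d w ^ 4) y ≤ K * env d p τ₀ y := by
  obtain ⟨K, hK, h⟩ := kern_bound d h0
  refine ⟨K, hK, fun τ hτ y => ?_⟩
  have hτ0 : 0 < τ := by linarith [hτ.1]
  unfold A env
  rw [← integral_const_mul]
  refine integral_mono (good4_q4.int hτ0 y) (Integrable.const_mul ?_ _) fun x => h τ hτ _
  refine Integrable.of_bound (C := 1) (Continuous.aestronglyMeasurable (by fun_prop)) ?_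
  refine Filter.Eventually.of_forall fun x => ?_
  rw [norm_eq_abs, abs_of_pos (exp_pos _)]
  apply exp_le_one_iff.2
  have : 0 ≤ 1 / (8 * τ₀) * ‖y - x‖ ^ 2 := by positivity
  linarith

/-- uniform envelope for four-fold products -/
lemma prod4_env {τ₀ : ℝ} (h0 : 0 < τ₀) : ∃ K : ℝ, 0 < K ∧
    ∀ τ ∈ Set.Icc (τ₀ / 2) (2 * τ₀), ∀ y : Euc d, ∀ f₁ f₂ f₃ f₄ : Euc d → ℝ,
      Good f₁ → Good f₂ → Good f₃ → Good f₄ →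
      |A d p τ (fun _ => 1) y * (br d p τ f₁ y * br d p τ f₂ y * br d p τ f₃ y * br d p τ f₄ y)|
        ≤ K * env d p τ₀ y := by
  obtain ⟨K, hK, h⟩ := A4_env (p := p) h0
  refine ⟨K, hK, fun τ hτ y f₁ f₂ f₃ f₄ h₁ h₂ h₃ h₄ => ?_⟩
  have hτ0 : 0 < τ := by linarith [hτ.1]
  refine le_trans ?_ (h τ hτ y)
  refine le_trans ?_ (NQ4 hτ0 y)
  have hN := N_pos (p := p) hτ0 y
  rw [abs_mul, abs_of_pos hN]
  refine mul_le_mul_of_nonneg_left ?_ hN.le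
  have hQ := one_le_Q (p := p) hτ0 y
  rw [abs_mul, abs_mul, abs_mul]
  calc _ ≤ br d p τ (qf d) y * br d p τ (qf d) y * br d p τ (qf d) y * br d p τ (qf d) y := by
        gcongr <;> exact br_abs (by assumption) hτ0 y
    _ = _ := by ring

lemma A_sm {f : Euc d → ℝ} (hf : Continuous f) (τ : ℝ) : StronglyMeasurable (A d p τ f) := by
  have hk := kern_cont d τ
  have : StronglyMeasurable (Function.uncurry fun y x : Euc d => f (y - x) * kern d τ (y - x)) :=
    Continuous.stronglyMeasurable (by unfold Function.uncurry; fun_prop)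
  exact this.integral_prod_right

lemma br_sm {f : Euc d → ℝ} (hf : Continuous f) (τ : ℝ) : StronglyMeasurable (br d p τ f) :=
  ((A_sm hf τ).measurable.div (A_sm continuous_const τ).measurable).stronglyMeasurable

lemma int4 {τ : ℝ} (hτ : 0 < τ) {f₁ f₂ f₃ f₄ : Euc d → ℝ}
    (h₁ : Good f₁) (h₂ : Good f₂) (h₃ : Good f₃) (h₄ : Good f₄) :
    Integrable (fun y => A d p τ (fun _ => 1) y *
      (br d p τ f₁ y * br d p τ f₂ y * br d p τ f₃ y * br d p τ f₄ y)) := by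
  obtain ⟨K, hK, h⟩ := prod4_env (p := p) hτ
  refine ((env_int (p := p) hτ).const_mul K).mono' ?_ ?_
  · exact ((A_sm continuous_const τ).mul ((((br_sm h₁.cont τ).mul (br_sm h₂.cont τ)).mul
      (br_sm h₃.cont τ)).mul (br_sm h₄.cont τ))).aestronglyMeasurable
  · exact Filter.Eventually.of_forall fun y => by
      rw [norm_eq_abs]; exact h τ (mem_self hτ) y _ _ _ _ h₁ h₂ h₃ h₄

end

section
variable {d : ℕ} {p : Measure (Euc d)} [IsProbabilityMeasure p]

/-- basis vector -/
def e (d : ℕ) (k : Fin d) : Euc d := EuclideanSpace.single k 1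

/-- Kronecker delta -/
def dl {d : ℕ} (i k : Fin d) : ℝ := if i = k then 1 else 0

lemma dl_or {d : ℕ} (i k : Fin d) : dl i k = 0 ∨ dl i k = 1 := by
  unfold dl; split_ifs <;> simp

lemma e_apply (i k : Fin d) : e d k i = dl i k := by
  simp [e, dl]

lemma norm_line (w : Euc d) (k : Fin d) (s : ℝ) :
    ‖w + s • e d k‖ ^ 2 = ‖w‖ ^ 2 + 2 * s * w k + s ^ 2 := by
  rw [norm_add_sq_real, norm_smul, mul_pow, inner_smul_right]
  simp [e, EuclideanSpace.inner_single_right]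
  ring

lemma coord_line (w : Euc d) (i k : Fin d) (s : ℝ) :
    (w + s • e d k) i = w i + s * dl i k := by
  simp [e_apply]

lemma coord_deriv (w : Euc d) (i k : Fin d) (s : ℝ) :
    HasDerivAt (fun s : ℝ => (w + s • e d k) i) (dl i k) s := by
  simp only [coord_line]
  simpa using ((hasDerivAt_id s).mul_const (dl i k)).const_add (w i)

lemma kern_line {τ : ℝ} (hτ : 0 < τ) (w : Euc d) (k : Fin d) (s : ℝ) :
    HasDerivAt (fun s : ℝ => kern d τ (w + s • e d k))
      (-((w + s • e d k) k / τ) * kern d τ (w + s • e d k)) s := by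
  unfold kern
  have h1 : HasDerivAt (fun s : ℝ => -‖w + s • e d k‖ ^ 2 / (2 * τ))
      (-((w + s • e d k) k / τ)) s := by
    simp only [norm_line, coord_line]
    have : HasDerivAt (fun s : ℝ => -(‖w‖ ^ 2 + 2 * s * w k + s ^ 2) / (2 * τ))
      (-(2 * 1 * w k + ((2:ℕ):ℝ) * s ^ (2 - 1) * 1) / (2 * τ)) s :=
      ((((((hasDerivAt_id s).const_mul 2).mul_const (w k)).const_add (‖w‖ ^ 2)).add
        ((hasDerivAt_id s).pow 2)).neg).div_const (2 * τ)
    convert this using 1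
    simp [dl]; field_simp; ring
  refine (h1.exp.const_mul ((2 * π * τ) ^ (-(d : ℝ) / 2))).congr_deriv ?_
  ring

lemma A_line {τ : ℝ} (hτ : 0 < τ) {f f' : Euc d → ℝ} {k : Fin d} (hf : Good f) (hf' : Good f')
    (hk : Good (fun w => f w * w k))
    (hd : ∀ (w : Euc d) (s : ℝ), HasDerivAt (fun s : ℝ => f (w + s • e d k)) (f' (w + s • e d k)) s)
    (y : Euc d) :
    HasDerivAt (fun s : ℝ => A d p τ f (y + s • e d k))
      (A d p τ f' y - A d p τ (fun w => f w * w k) y / τ) 0 := by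
  obtain ⟨K, hK, h⟩ := kern_bound' d hτ
  have hc := hf.cont
  have hc' := hf'.cont
  have hkc := kern_cont d τ
  have main := hasDerivAt_integral_of_dominated_loc_of_deriv_le (μ := p)
    (F := fun (s : ℝ) x => f (y - x + s • e d k) * kern d τ (y - x + s • e d k))
    (F' := fun (s : ℝ) x => f' (y - x + s • e d k) * kern d τ (y - x + s • e d k) -
      f (y - x + s • e d k) * (y - x + s • e d k) k * kern d τ (y - x + s • e d k) / τ)
    (bound := fun _ => K + K / τ) (x₀ := 0) (s := Set.univ) Filter.univ_mem
    (Filter.Eventually.of_forall fun s => Continuous.aestronglyMeasurable (by fun_prop))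
    (by simpa using hf.good4.int hτ y)
    (Continuous.aestronglyMeasurable (by fun_prop))
    (Filter.Eventually.of_forall fun x s _ => by
      rw [norm_eq_abs]
      refine (abs_sub _ _).trans (add_le_add ?_ ?_)
      · exact (hf'.good4.bd_kern hτ _).trans (h τ (mem_self hτ) _)
      · rw [abs_div, abs_of_pos hτ]
        exact div_le_div_of_nonneg_right
          ((hk.good4.bd_kern hτ _).trans (h τ (mem_self hτ) _)) hτ.le)
    (integrable_const _)
    (Filter.Eventually.of_forall fun x s _ => by
      have := (hd (y - x) s).mul (kern_line hτ (y - x) k s)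
      refine this.congr_deriv ?_
      ring)
  have h2 := main.2
  have e1 : ∫ x, (f' (y - x + (0:ℝ) • e d k) * kern d τ (y - x + (0:ℝ) • e d k) -
      f (y - x + (0:ℝ) • e d k) * (y - x + (0:ℝ) • e d k) k * kern d τ (y - x + (0:ℝ) • e d k) / τ) ∂p
      = A d p τ f' y - A d p τ (fun w => f w * w k) y / τ := by
    simp only [zero_smul, add_zero]
    unfold A
    rw [← integral_div, ← integral_sub (hf'.good4.int hτ y) ((hk.good4.int hτ y).div_const _)]
  rw [e1] at h2
  have e2 : (fun s : ℝ => A d p τ f (y + s • e d k)) =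
      fun s : ℝ => ∫ x, f (y - x + s • e d k) * kern d τ (y - x + s • e d k) ∂p := by
    funext s
    unfold A
    congr 1; ext x
    rw [show y + s • e d k - x = y - x + s • e d k by abel]
  rw [e2]
  exact h2

lemma kern_tau {τ : ℝ} (hτ : 0 < τ) (w : Euc d) :
    HasDerivAt (fun τ : ℝ => kern d τ w)
      (‖w‖ ^ 2 * kern d τ w / (2 * τ ^ 2) - d / (2 * τ) * kern d τ w) τ := by
  unfold kern
  have h1 : HasDerivAt (fun τ : ℝ => (2 * π * τ) ^ (-(d : ℝ) / 2))
      (-(d / (2 * τ)) * (2 * π * τ) ^ (-(d : ℝ) / 2)) τ := by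
    have : HasDerivAt (fun τ : ℝ => 2 * π * τ) (2 * π) τ := by
      simpa using (hasDerivAt_id τ).const_mul (2 * π)
    have h := this.rpow_const (p := -(d : ℝ) / 2) (Or.inl (by positivity))
    refine h.congr_deriv ?_
    rw [rpow_sub_one (by positivity)]
    field_simp
  have h2 : HasDerivAt (fun τ : ℝ => -‖w‖ ^ 2 / (2 * τ)) (‖w‖ ^ 2 / (2 * τ ^ 2)) τ := by
    have : HasDerivAt (fun τ : ℝ => 2 * τ) 2 τ := by
      simpa using (hasDerivAt_id τ).const_mul 2
    have h := (hasDerivAt_const τ (-‖w‖ ^ 2)).div this (by positivity)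
    refine h.congr_deriv ?_
    field_simp; ring
  refine (h1.mul h2.exp).congr_deriv ?_
  ring

lemma A_tau {τ₀ : ℝ} (h0 : 0 < τ₀) {f : Euc d → ℝ} (hf : Good f)
    (hk : Good (fun w => f w * ‖w‖ ^ 2)) (y : Euc d) :
    HasDerivAt (fun τ : ℝ => A d p τ f y)
      (A d p τ₀ (fun w => f w * ‖w‖ ^ 2) y / (2 * τ₀ ^ 2) - d / (2 * τ₀) * A d p τ₀ f y) τ₀ := by
  obtain ⟨K, hK, h⟩ := kern_bound' d h0
  have hc := hf.cont
  have hkc := kern_cont d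
  have main := hasDerivAt_integral_of_dominated_loc_of_deriv_le (μ := p)
    (F := fun (τ : ℝ) x => f (y - x) * kern d τ (y - x))
    (F' := fun (τ : ℝ) x => f (y - x) * ‖y - x‖ ^ 2 * kern d τ (y - x) / (2 * τ ^ 2) -
      d / (2 * τ) * (f (y - x) * kern d τ (y - x)))
    (bound := fun _ => K / (2 * (τ₀ / 2) ^ 2) + d / (2 * (τ₀ / 2)) * K) (x₀ := τ₀)
    (s := Set.Icc (τ₀ / 2) (2 * τ₀)) (Icc_mem_nhds (by linarith) (by linarith))
    (Filter.Eventually.of_forall fun s => Continuous.aestronglyMeasurable (by fun_prop))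
    (hf.good4.int h0 y)
    (Continuous.aestronglyMeasurable (by fun_prop))
    (Filter.Eventually.of_forall fun x τ hτ => by
      have hτ0 : 0 < τ := by linarith [hτ.1]
      have := hτ.1
      rw [norm_eq_abs]
      refine (abs_sub _ _).trans (add_le_add ?_ ?_)
      · rw [abs_div, abs_of_pos (show 0 < 2 * τ ^ 2 by positivity)]
        have := (hk.good4.bd_kern hτ0 (y - x)).trans (h τ hτ _)
        gcongr
      · rw [abs_mul, abs_of_nonneg (show 0 ≤ (d:ℝ) / (2 * τ) by positivity)]
        have := (hf.good4.bd_kern hτ0 (y - x)).trans (h τ hτ _)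
        gcongr)
    (integrable_const _)
    (Filter.Eventually.of_forall fun x τ hτ => by
      have hτ0 : 0 < τ := by linarith [hτ.1]
      refine ((kern_tau hτ0 (y - x)).const_mul (f (y - x))).congr_deriv ?_
      ring)
  refine main.2.congr_deriv ?_
  unfold A
  rw [← integral_div, ← integral_const_mul, ← integral_sub ((hk.good4.int h0 y).div_const _)
    ((hf.good4.int h0 y).const_mul _)]

/-- divergence theorem -/
lemma int_line_zero {f f' : Euc d → ℝ} (k : Fin d) (hf : Integrable f) (hf' : Integrable f')
    (h : ∀ y, HasDerivAt (fun s : ℝ => f (y + s • e d k)) (f' y) 0) : ∫ y, f' y = 0 := by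
  have := integral_bilinear_hasLineDerivAt_right_eq_neg_left_of_integrable (μ := volume)
    (f := fun _ : Euc d => (1:ℝ)) (f' := fun _ => 0) (g := f) (g' := f') (v := e d k)
    (B := ContinuousLinearMap.mul ℝ ℝ) (by simp) (by simpa using hf') (by simpa using hf)
    (fun x _ => by simpa [HasLineDerivAt] using hasDerivAt_const (0:ℝ) (1:ℝ)) (fun x _ => h x)
  simpa using this

end

section
variable {d : ℕ} {p : Measure (Euc d)} [IsProbabilityMeasure p]

/-- density -/
abbrev NN (d : ℕ) (p : Measure (Euc d)) (τ : ℝ) (y : Euc d) : ℝ := A d p τ (fun _ => 1) y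
abbrev r1 (d : ℕ) (p : Measure (Euc d)) (τ : ℝ) (i : Fin d) (y : Euc d) : ℝ :=
  br d p τ (fun w => w i) y
abbrev r2 (d : ℕ) (p : Measure (Euc d)) (τ : ℝ) (i k : Fin d) (y : Euc d) : ℝ :=
  br d p τ (fun w => w i * w k) y
abbrev r3 (d : ℕ) (p : Measure (Euc d)) (τ : ℝ) (i k : Fin d) (y : Euc d) : ℝ :=
  br d p τ (fun w => w i * w k * w k) y
abbrev Cv (d : ℕ) (p : Measure (Euc d)) (τ : ℝ) (i k : Fin d) (y : Euc d) : ℝ :=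
  r2 d p τ i k y - r1 d p τ i y * r1 d p τ k y

structure Bdd (p : Measure (Euc d)) (τ : ℝ) (m : ℕ) (F : Euc d → ℝ) : Prop where
  meas : StronglyMeasurable F
  bd : ∃ C : ℝ, 0 ≤ C ∧ ∀ y, |F y| ≤ C * br d p τ (qf d) y ^ m

lemma Bdd.mono {τ : ℝ} (hτ : 0 < τ) {m n : ℕ} {F : Euc d → ℝ} (h : Bdd p τ m F) (hmn : m ≤ n) :
    Bdd p τ n F := by
  obtain ⟨hm, C, hC, h⟩ := h
  refine ⟨hm, C, hC, fun y => (h y).trans ?_⟩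
  gcongr
  exact one_le_Q hτ y

lemma Bdd.add {τ : ℝ} {m : ℕ} {F G : Euc d → ℝ} (hF : Bdd p τ m F) (hG : Bdd p τ m G) :
    Bdd p τ m (fun y => F y + G y) := by
  obtain ⟨hm, C, hC, h⟩ := hF
  obtain ⟨hm', C', hC', h'⟩ := hG
  refine ⟨hm.add hm', C + C', by positivity, fun y => (abs_add_le _ _).trans ?_⟩
  rw [add_mul]
  exact add_le_add (h y) (h' y)

lemma Bdd.const_mul {τ : ℝ} {m : ℕ} {F : Euc d → ℝ} (hF : Bdd p τ m F) (c : ℝ) :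
    Bdd p τ m (fun y => c * F y) := by
  obtain ⟨hm, C, hC, h⟩ := hF
  refine ⟨hm.const_mul c, |c| * C, by positivity, fun y => ?_⟩
  rw [abs_mul, mul_assoc]
  exact mul_le_mul_of_nonneg_left (h y) (abs_nonneg _)

lemma Bdd.sub {τ : ℝ} {m : ℕ} {F G : Euc d → ℝ} (hF : Bdd p τ m F) (hG : Bdd p τ m G) :
    Bdd p τ m (fun y => F y - G y) := by
  have := hF.add (hG.const_mul (-1))
  simpa [sub_eq_add_neg] using this

lemma Bdd.div_const {τ : ℝ} {m : ℕ} {F : Euc d → ℝ} (hF : Bdd p τ m F) (c : ℝ) :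
    Bdd p τ m (fun y => F y / c) := by
  have := hF.const_mul c⁻¹
  simpa [div_eq_mul_inv, mul_comm] using this

lemma Bdd.mul {τ : ℝ} (hτ : 0 < τ) {m n : ℕ} {F G : Euc d → ℝ} (hF : Bdd p τ m F)
    (hG : Bdd p τ n G) :
    Bdd p τ (m + n) (fun y => F y * G y) := by
  obtain ⟨hm, C, hC, h⟩ := hF
  obtain ⟨hm', C', hC', h'⟩ := hG
  refine ⟨hm.mul hm', C * C', by positivity, fun y => ?_⟩
  have hQ := one_le_Q (p := p) hτ y
  rw [abs_mul, pow_add]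
  calc |F y| * |G y| ≤ (C * br d p τ (qf d) y ^ m) * (C' * br d p τ (qf d) y ^ n) := by
        gcongr
        · exact h y
        · exact h' y
    _ = _ := by ring

lemma Bdd.const {τ : ℝ} (c : ℝ) : Bdd (d := d) p τ 0 (fun _ => c) :=
  ⟨stronglyMeasurable_const, |c|, abs_nonneg _, fun y => by simp⟩

lemma Good.Bdd {τ : ℝ} (hτ : 0 < τ) {f : Euc d → ℝ} (hf : Good f) : Bdd p τ 1 (br d p τ f) :=
  ⟨br_sm hf.cont τ, 1, by norm_num, fun y => by simpa using br_abs hf hτ y⟩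

lemma Bdd.int {τ : ℝ} (hτ : 0 < τ) {m : ℕ} (hm : m ≤ 4) {F : Euc d → ℝ} (h : Bdd p τ m F) :
    Integrable (fun y => NN d p τ y * F y) := by
  obtain ⟨hF, C, hC, h⟩ := h.mono hτ hm
  obtain ⟨K, hK, h4⟩ := A4_env (p := p) hτ
  refine ((env_int (p := p) hτ).const_mul (C * K)).mono' ?_ ?_
  · exact ((A_sm continuous_const τ).mul hF).aestronglyMeasurable
  · refine Filter.Eventually.of_forall fun y => ?_
    have hN := N_pos (p := p) hτ y
    rw [norm_eq_abs, abs_mul, abs_of_pos hN]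
    calc _ ≤ NN d p τ y * (C * br d p τ (qf d) y ^ 4) := by gcongr; exact h y
      _ = C * (NN d p τ y * br d p τ (qf d) y ^ 4) := by ring
      _ ≤ C * (K * env d p τ y) := by
        exact mul_le_mul_of_nonneg_left ((NQ4 hτ y).trans (h4 τ (mem_self hτ) y)) hC
      _ = _ := by ring

lemma bdd_r1 {τ : ℝ} (hτ : 0 < τ) (i : Fin d) : Bdd p τ 1 (r1 d p τ i) := (good_x i).Bdd hτ
lemma bdd_r2 {τ : ℝ} (hτ : 0 < τ) (i k : Fin d) : Bdd p τ 1 (r2 d p τ i k) := (good_xx i k).Bdd hτ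
lemma bdd_r3 {τ : ℝ} (hτ : 0 < τ) (i k : Fin d) : Bdd p τ 1 (r3 d p τ i k) := (good_xxx i k).Bdd hτ
lemma bdd_C {τ : ℝ} (hτ : 0 < τ) (i k : Fin d) : Bdd p τ 2 (Cv d p τ i k) :=
  ((bdd_r2 hτ i k).mono hτ (by norm_num)).sub ((bdd_r1 hτ i).mul hτ (bdd_r1 hτ k))
lemma bdd_D {τ : ℝ} (hτ : 0 < τ) (i k : Fin d) :
    Bdd p τ 2 (fun y => dl i k - Cv d p τ i k y / τ) :=
  ((Bdd.const (dl i k)).mono hτ (by norm_num)).sub ((bdd_C hτ i k).div_const τ)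

/-! line derivatives -/
lemma N_line {τ : ℝ} (hτ : 0 < τ) (k : Fin d) (y : Euc d) :
    HasDerivAt (fun s : ℝ => A d p τ (fun _ => 1) (y + s • e d k))
      (-(NN d p τ y * r1 d p τ k y) / τ) 0 := by
  have := A_line (p := p) hτ (f := fun _ => 1) (f' := fun _ => 0) (k := k) good_one
    (good_const 0 (Or.inl rfl)) (by simpa using good_x k) (fun w s => hasDerivAt_const _ _) y
  refine this.congr_deriv ?_
  have e0 : A d p τ (fun _ => 0) y = 0 := by simp [A]
  rw [e0]
  simp only [one_mul]
  rw [A_eq_br (p := p) hτ (fun w => w k)]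
  ring

lemma R_line {τ : ℝ} (hτ : 0 < τ) (i k : Fin d) (y : Euc d) :
    HasDerivAt (fun s : ℝ => A d p τ (fun w => w i) (y + s • e d k))
      (NN d p τ y * (dl i k - r2 d p τ i k y / τ)) 0 := by
  have := A_line (p := p) hτ (f := fun w => w i) (f' := fun _ => dl i k) (k := k) (good_x i)
    (good_const _ (dl_or i k)) (good_xx i k) (fun w s => coord_deriv w i k s) y
  refine this.congr_deriv ?_
  have e0 : A d p τ (fun _ => dl i k) y = dl i k * NN d p τ y := by
    simp [A, integral_const_mul]
  rw [e0, A_eq_br (p := p) hτ (fun w => w i * w k)]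
  ring

lemma S_line {τ : ℝ} (hτ : 0 < τ) (i k : Fin d) (y : Euc d) :
    HasDerivAt (fun s : ℝ => A d p τ (fun w => w i * w k) (y + s • e d k))
      (NN d p τ y * (dl i k * r1 d p τ k y + r1 d p τ i y - r3 d p τ i k y / τ)) 0 := by
  have := A_line (p := p) hτ (f := fun w => w i * w k) (f' := fun w => dl i k * w k + w i) (k := k)
    (good_xx i k) (good_dxx _ (dl_or i k) i k) (good_xxx i k) (fun w s => by
      refine ((coord_deriv w i k s).mul (coord_deriv w k k s)).congr_deriv ?_
      simp [dl]) y
  refine this.congr_deriv ?_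
  have e0 : A d p τ (fun w => dl i k * w k + w i) y =
      dl i k * A d p τ (fun w => w k) y + A d p τ (fun w => w i) y := by
    unfold A
    rw [← integral_const_mul, ← integral_add (((good_x k).good4.int hτ y).const_mul _)
      ((good_x i).good4.int hτ y)]
    congr 1; ext x; ring
  rw [e0, A_eq_br (p := p) hτ (fun w => w i * w k * w k), A_eq_br (p := p) hτ (fun w => w k),
    A_eq_br (p := p) hτ (fun w => w i)]
  ring

/-- abstract calculus lemma -/
lemma calc_G (n a b c u v : ℝ → ℝ) (n' a' b' c' u' v' δ ε τ : ℝ)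
    (hn : HasDerivAt n n' 0) (ha : HasDerivAt a a' 0) (hb : HasDerivAt b b' 0)
    (hc : HasDerivAt c c' 0) (hu : HasDerivAt u u' 0) (hv : HasDerivAt v v' 0) (hn0 : n 0 ≠ 0) :
    HasDerivAt (fun s => 1 / 2 * ((δ * n s - u s / τ) * b s / n s + a s * (ε * n s - v s / τ) / n s
      + a s * b s * c s / (n s) ^ 2 / τ))
      (1 / 2 * ((((δ * n' - u' / τ) * b 0 + (δ * n 0 - u 0 / τ) * b') * n 0 -
        (δ * n 0 - u 0 / τ) * b 0 * n') / n 0 ^ 2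
        + ((a' * (ε * n 0 - v 0 / τ) + a 0 * (ε * n' - v' / τ)) * n 0 -
          a 0 * (ε * n 0 - v 0 / τ) * n') / n 0 ^ 2
        + (((a' * b 0 + a 0 * b') * c 0 + a 0 * b 0 * c') * n 0 ^ 2 -
          a 0 * b 0 * c 0 * (2 * n 0 * n')) / (n 0 ^ 2) ^ 2 / τ)) 0 := by
  have h1 : HasDerivAt (fun s => δ * n s - u s / τ) (δ * n' - u' / τ) 0 :=
    (hn.const_mul δ).sub (hu.div_const τ)
  have h2 : HasDerivAt (fun s => ε * n s - v s / τ) (ε * n' - v' / τ) 0 :=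
    (hn.const_mul ε).sub (hv.div_const τ)
  have h3 : HasDerivAt (fun s => n s ^ 2) (2 * n 0 * n') 0 := by
    have h : HasDerivAt (fun s => n s ^ 2) _ 0 := hn.pow 2
    exact h.congr_deriv (by simp)
  exact ((((h1.mul hb).div hn hn0).add ((ha.mul h2).div hn hn0)).add
    ((((ha.mul hb).mul hc).div h3 (pow_ne_zero 2 hn0)).div_const τ)).const_mul (1 / 2)

/-- the `k`-th piece of the `τ`-derivative -/
abbrev Lk (d : ℕ) (p : Measure (Euc d)) (τ : ℝ) (i j k : Fin d) (y : Euc d) : ℝ :=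
  (1 / (2 * τ ^ 2)) * (r3 d p τ i k y * r1 d p τ j y + r1 d p τ i y * r3 d p τ j k y
    - r1 d p τ i y * r1 d p τ j y * r2 d p τ k k y) - (1 / (2 * τ)) * (r1 d p τ i y * r1 d p τ j y)

abbrev DD (d : ℕ) (p : Measure (Euc d)) (τ : ℝ) (i j k : Fin d) (y : Euc d) : ℝ :=
  (dl i k - Cv d p τ i k y / τ) * (dl j k - Cv d p τ j k y / τ)

abbrev EE (d : ℕ) (p : Measure (Euc d)) (τ : ℝ) (i j k : Fin d) (y : Euc d) : ℝ :=
  (dl i k * (r1 d p τ k y * r1 d p τ j y) + dl j k * (r1 d p τ k y * r1 d p τ i y)) / τ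

lemma bdd_L {τ : ℝ} (hτ : 0 < τ) (i j k : Fin d) : Bdd p τ 4 (Lk d p τ i j k) := by
  refine Bdd.sub (Bdd.const_mul (Bdd.sub (Bdd.add ?_ ?_) ?_) _) (Bdd.const_mul ?_ _)
  · exact ((bdd_r3 hτ i k).mul hτ (bdd_r1 hτ j)).mono hτ (by norm_num)
  · exact ((bdd_r1 hτ i).mul hτ (bdd_r3 hτ j k)).mono hτ (by norm_num)
  · exact (((bdd_r1 hτ i).mul hτ (bdd_r1 hτ j)).mul hτ (bdd_r2 hτ k k)).mono hτ (by norm_num)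
  · exact ((bdd_r1 hτ i).mul hτ (bdd_r1 hτ j)).mono hτ (by norm_num)

lemma bdd_DD {τ : ℝ} (hτ : 0 < τ) (i j k : Fin d) : Bdd p τ 4 (DD d p τ i j k) :=
  (bdd_D hτ i k).mul hτ (bdd_D hτ j k)

lemma bdd_EE {τ : ℝ} (hτ : 0 < τ) (i j k : Fin d) : Bdd p τ 4 (EE d p τ i j k) := by
  refine Bdd.div_const (Bdd.add (Bdd.const_mul ?_ _) (Bdd.const_mul ?_ _)) _
  · exact ((bdd_r1 hτ k).mul hτ (bdd_r1 hτ j)).mono hτ (by norm_num)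
  · exact ((bdd_r1 hτ k).mul hτ (bdd_r1 hτ i)).mono hτ (by norm_num)

lemma int_G_zero {τ : ℝ} (hτ : 0 < τ) (i j k : Fin d) :
    ∫ y, NN d p τ y * (Lk d p τ i j k y + DD d p τ i j k y - EE d p τ i j k y) = 0 := by
  refine int_line_zero k (f := fun y => 1 / 2 * (
    (dl i k * A d p τ (fun _ => 1) y - A d p τ (fun w => w i * w k) y / τ) *
      A d p τ (fun w => w j) y / A d p τ (fun _ => 1) y +
    A d p τ (fun w => w i) y * (dl j k * A d p τ (fun _ => 1) y -
      A d p τ (fun w => w j * w k) y / τ) / A d p τ (fun _ => 1) y +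
    A d p τ (fun w => w i) y * A d p τ (fun w => w j) y * A d p τ (fun w => w k) y /
      A d p τ (fun _ => 1) y ^ 2 / τ)) ?_ ?_ ?_
  · have hb : Bdd p τ 3 (fun y => 1 / 2 * ((dl i k - r2 d p τ i k y / τ) * r1 d p τ j y +
        r1 d p τ i y * (dl j k - r2 d p τ j k y / τ) +
        r1 d p τ i y * r1 d p τ j y * r1 d p τ k y / τ)) := by
      refine Bdd.const_mul (Bdd.add (Bdd.add ?_ ?_) ?_) _
      · exact ((((Bdd.const _).mono hτ (by norm_num)).sub ((bdd_r2 hτ i k).div_const τ)).mul hτ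
          (bdd_r1 hτ j)).mono hτ (by norm_num)
      · exact ((bdd_r1 hτ i).mul hτ (((Bdd.const _).mono hτ (by norm_num)).sub
          ((bdd_r2 hτ j k).div_const τ))).mono hτ (by norm_num)
      · exact (((bdd_r1 hτ i).mul hτ (bdd_r1 hτ j)).mul hτ (bdd_r1 hτ k)).div_const τ
    refine (hb.int hτ (by norm_num)).congr (Filter.Eventually.of_forall fun y => ?_)
    have hN := (N_pos (p := p) hτ y).ne'
    simp only [NN]
    rw [A_eq_br (p := p) hτ (fun w => w i * w k), A_eq_br (p := p) hτ (fun w => w j * w k), A_eq_br (p := p) hτ (fun w => w i),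
      A_eq_br (p := p) hτ (fun w => w j), A_eq_br (p := p) hτ (fun w => w k)]
    field_simp
  · exact (((bdd_L hτ i j k).add (bdd_DD hτ i j k)).sub (bdd_EE hτ i j k)).int hτ le_rfl
  · intro y
    have hN := (N_pos (p := p) hτ y).ne'
    have := calc_G _ _ _ _ _ _ _ _ _ _ _ _ (dl i k) (dl j k) τ (N_line (p := p) hτ k y)
      (R_line (p := p) hτ i k y) (R_line (p := p) hτ j k y) (R_line (p := p) hτ k k y) (S_line (p := p) hτ i k y) (S_line (p := p) hτ j k y)
      (by simpa using hN)
    refine this.congr_deriv ?_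
    simp only [zero_smul, add_zero]
    have hkk : dl k k = 1 := by simp [dl]
    rw [A_eq_br (p := p) hτ (fun w => w i * w k), A_eq_br (p := p) hτ (fun w => w j * w k), A_eq_br (p := p) hτ (fun w => w i),
      A_eq_br (p := p) hτ (fun w => w j), A_eq_br (p := p) hτ (fun w => w k), hkk]
    simp only [Lk, DD, EE, Cv, r1, r2, r3, NN]
    generalize A d p τ (fun _ => 1) y = n at *
    field_simp
    ring

end

section
variable {d : ℕ} {p : Measure (Euc d)} [IsProbabilityMeasure p]

lemma kern_integrable {τ : ℝ} (hτ : 0 < τ) : Integrable (kern d τ) := by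
  have := (gauss_int (d := d) (b := 1 / (2 * τ)) (by positivity)).const_mul
    ((2 * π * τ) ^ (-(d : ℝ) / 2))
  refine this.congr (Filter.Eventually.of_forall fun w => ?_)
  unfold kern
  simp only []
  congr 2; ring

lemma kern_integral {τ : ℝ} (hτ : 0 < τ) : ∫ w, kern d τ w = 1 := by
  have h := GaussianFourier.integral_rexp_neg_mul_sq_norm (V := Euc d) (b := 1 / (2 * τ))
    (by positivity)
  have e1 : ∀ w : Euc d, kern d τ w = (2 * π * τ) ^ (-(d : ℝ) / 2) *
      exp (-(1 / (2 * τ)) * ‖w‖ ^ 2) := by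
    intro w; unfold kern; congr 2; ring
  simp_rw [e1]
  rw [integral_const_mul, h]
  have : π / (1 / (2 * τ)) = 2 * π * τ := by field_simp
  rw [this, finrank_euclideanSpace, Fintype.card_fin, ← rpow_add (by positivity)]
  rw [neg_div, neg_add_cancel, rpow_zero]

lemma N_integral {τ : ℝ} (hτ : 0 < τ) : ∫ y, NN d p τ y = 1 := by
  have h := conv_int (p := p) (kern_integrable (d := d) hτ)
  unfold NN A
  simp only [one_mul]
  rw [integral_integral_swap h]
  simp_rw [integral_sub_right_eq_self (kern d τ), kern_integral hτ]
  simp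

lemma N_int {τ : ℝ} (hτ : 0 < τ) : Integrable (NN d p τ) := by
  have := (Bdd.const (d := d) (p := p) (τ := τ) 1).int hτ (by norm_num)
  simpa using this

lemma S_integral {τ : ℝ} (hτ : 0 < τ) (i k : Fin d) :
    ∫ y, NN d p τ y * r2 d p τ i k y = τ * dl i k := by
  have hD : Bdd p τ 1 (fun y => dl i k - r2 d p τ i k y / τ) :=
    ((Bdd.const _).mono hτ (by norm_num)).sub ((bdd_r2 hτ i k).div_const τ)
  have h := int_line_zero k (f := A d p τ (fun w => w i))
    (((bdd_r1 (p := p) hτ i).int hτ (by norm_num)).congr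
      (Filter.Eventually.of_forall fun y => (A_eq_br hτ _ y).symm))
    (hD.int hτ (by norm_num)) (fun y => R_line hτ i k y)
  have h2 := (bdd_r2 (p := p) hτ i k).int hτ (by norm_num)
  have e1 : ∫ y, NN d p τ y * (dl i k - r2 d p τ i k y / τ) =
      dl i k * (∫ y, NN d p τ y) - (∫ y, NN d p τ y * r2 d p τ i k y) / τ := by
    rw [← integral_const_mul, ← integral_div, ← integral_sub ((N_int hτ).const_mul _)
      (h2.div_const _)]
    congr 1; ext y; ring
  rw [e1, N_integral hτ, sub_eq_zero, mul_one, eq_div_iff hτ.ne'] at h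
  rw [← h]; ring

/-- second moment of posterior mean of the noise -/
abbrev JJ (d : ℕ) (p : Measure (Euc d)) (i j : Fin d) (τ : ℝ) : ℝ :=
  ∫ y, NN d p τ y * (r1 d p τ i y * r1 d p τ j y)

lemma bdd_rr {τ : ℝ} (hτ : 0 < τ) (i j : Fin d) :
    Bdd p τ 2 (fun y => r1 d p τ i y * r1 d p τ j y) := (bdd_r1 hτ i).mul hτ (bdd_r1 hτ j)

lemma C_integral {τ : ℝ} (hτ : 0 < τ) (i j : Fin d) :
    ∫ y, NN d p τ y * Cv d p τ i j y = τ * dl i j - JJ d p i j τ := by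
  rw [← S_integral (p := p) hτ i j, JJ, ← integral_sub ((bdd_r2 hτ i j).int hτ (by norm_num))
    ((bdd_rr hτ i j).int hτ (by norm_num))]
  congr 1; ext y; simp only [Cv]; ring

lemma norm_sum (w : Euc d) : ‖w‖ ^ 2 = ∑ k, w k * w k := by
  rw [EuclideanSpace.norm_sq_eq]
  simp [sq]

lemma J_point {τ : ℝ} (hτ : 0 < τ) (i j : Fin d) (y : Euc d) :
    HasDerivAt (fun τ => NN d p τ y * (r1 d p τ i y * r1 d p τ j y))
      (NN d p τ y * ∑ k, Lk d p τ i j k y) τ := by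
  have hN := (N_pos (p := p) hτ y).ne'
  have h1 := A_tau (p := p) hτ good_one good_n y
  have h2 := A_tau (p := p) hτ (good_x i) (good_xn i) y
  have h3 := A_tau (p := p) hτ (good_x j) (good_xn j) y
  have e1 : A d p τ (fun w => 1 * ‖w‖ ^ 2) y = NN d p τ y * ∑ k, r2 d p τ k k y := by
    rw [Finset.mul_sum]
    simp_rw [r2, NN, ← A_eq_br hτ]
    unfold A
    rw [← integral_finsetSum _ (fun k _ => (good_xx k k).good4.int hτ y)]
    congr 1; ext x; simp only [one_mul]; rw [norm_sum, Finset.sum_mul]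
  have e2 : ∀ i, A d p τ (fun w => w i * ‖w‖ ^ 2) y = NN d p τ y * ∑ k, r3 d p τ i k y := by
    intro i
    rw [Finset.mul_sum]
    simp_rw [r3, NN, ← A_eq_br hτ]
    unfold A
    rw [← integral_finsetSum _ (fun k _ => (good_xxx i k).good4.int hτ y)]
    congr 1; ext x; simp only []; rw [norm_sum, Finset.mul_sum, Finset.sum_mul]
    simp only [mul_assoc]
  rw [e1] at h1
  rw [e2] at h2 h3
  have hq := (h2.mul h3).div h1 hN
  refine HasDerivAt.congr_deriv (HasDerivAt.congr_of_eventuallyEq hq ?_) ?_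
  · filter_upwards [lt_mem_nhds hτ] with s hs
    have hN' := (N_pos (p := p) hs y).ne'
    simp only [Pi.mul_apply, Pi.div_apply]
    rw [A_eq_br hs (fun w => w i), A_eq_br hs (fun w => w j)]
    simp only [NN, r1]
    field_simp
  have e3 : ∑ k, Lk d p τ i j k y = (1 / (2 * τ ^ 2)) * ((∑ k, r3 d p τ i k y) * r1 d p τ j y +
      r1 d p τ i y * (∑ k, r3 d p τ j k y) - r1 d p τ i y * r1 d p τ j y * ∑ k, r2 d p τ k k y) -
      d * ((1 / (2 * τ)) * (r1 d p τ i y * r1 d p τ j y)) := by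
    simp only [Lk]
    rw [Finset.sum_sub_distrib, ← Finset.mul_sum, Finset.sum_sub_distrib, Finset.sum_add_distrib,
      Finset.sum_mul, Finset.mul_sum, Finset.mul_sum]
    simp
  rw [e3]
  simp only [Pi.mul_apply, Pi.div_apply]
  rw [A_eq_br hτ (fun w => w i), A_eq_br hτ (fun w => w j)]
  simp only [NN, r1] at *
  generalize A d p τ (fun _ => 1) y = n at *
  field_simp
  ring

lemma L_env {τ₀ : ℝ} (h0 : 0 < τ₀) : ∃ K : ℝ, 0 < K ∧
    ∀ τ ∈ Set.Icc (τ₀ / 2) (2 * τ₀), ∀ (y : Euc d) (i j : Fin d),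
      |NN d p τ y * ∑ k, Lk d p τ i j k y| ≤ K * env d p τ₀ y := by
  obtain ⟨K, hK, h⟩ := prod4_env (p := p) h0
  refine ⟨(d + 1) * ((1 / (2 * (τ₀ / 2) ^ 2)) * (3 * K) + 1 / (2 * (τ₀ / 2)) * K),
    by positivity, fun τ hτ y i j => ?_⟩
  have hτ0 : 0 < τ := by linarith [hτ.1]
  have hτ1 := hτ.1
  have hone := br_one (p := p) hτ0 y
  have henv : 0 ≤ env d p τ₀ y := integral_nonneg fun x => (exp_pos _).le
  have key : ∀ k, |NN d p τ y * Lk d p τ i j k y| ≤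
      ((1 / (2 * (τ₀ / 2) ^ 2)) * (3 * K) + 1 / (2 * (τ₀ / 2)) * K) * env d p τ₀ y := by
    intro k
    have a1 := h τ hτ y _ _ _ _ (good_xxx i k) (good_x j) good_one good_one
    have a2 := h τ hτ y _ _ _ _ (good_x i) (good_xxx j k) good_one good_one
    have a3 := h τ hτ y _ _ _ _ (good_x i) (good_x j) (good_xx k k) good_one
    have a4 := h τ hτ y _ _ _ _ (good_x i) (good_x j) good_one good_one
    simp only [hone, mul_one] at a1 a2 a3 a4
    have e : NN d p τ y * Lk d p τ i j k y = (1 / (2 * τ ^ 2)) *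
      (NN d p τ y * (r3 d p τ i k y * r1 d p τ j y) + NN d p τ y * (r1 d p τ i y * r3 d p τ j k y)
      - NN d p τ y * (r1 d p τ i y * r1 d p τ j y * r2 d p τ k k y))
      - (1 / (2 * τ)) * (NN d p τ y * (r1 d p τ i y * r1 d p τ j y)) := by
      simp only [Lk]; ring
    rw [e, add_mul]
    refine (abs_sub _ _).trans (add_le_add ?_ ?_)
    · rw [abs_mul, abs_of_pos (show 0 < 1 / (2 * τ ^ 2) by positivity), mul_assoc (1 / (2 * (τ₀ / 2) ^ 2))]
      apply mul_le_mul _ _ (abs_nonneg _) (by positivity)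
      · gcongr
      · refine (abs_sub _ _).trans ?_
        have := abs_add_le (NN d p τ y * (r3 d p τ i k y * r1 d p τ j y))
          (NN d p τ y * (r1 d p τ i y * r3 d p τ j k y))
        linarith
    · rw [abs_mul, abs_of_pos (show 0 < 1 / (2 * τ) by positivity), mul_assoc (1 / (2 * (τ₀ / 2)))]
      apply mul_le_mul _ a4 (abs_nonneg _) (by positivity)
      gcongr
  rw [Finset.mul_sum]
  refine (Finset.abs_sum_le_sum_abs _ _).trans ((Finset.sum_le_sum fun k _ => key k).trans ?_)
  rw [Finset.sum_const, Finset.card_univ, Fintype.card_fin, nsmul_eq_mul, mul_assoc (_ + 1)]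
  apply mul_le_mul_of_nonneg_right (by linarith) (by positivity)

lemma J_deriv {τ₀ : ℝ} (h0 : 0 < τ₀) (i j : Fin d) :
    HasDerivAt (JJ d p i j) (∫ y, NN d p τ₀ y * ∑ k, Lk d p τ₀ i j k y) τ₀ := by
  obtain ⟨K, hK, h⟩ := L_env (p := p) h0
  have hs : ∀ τ, StronglyMeasurable (NN d p τ) := fun τ => A_sm continuous_const τ
  exact (hasDerivAt_integral_of_dominated_loc_of_deriv_le
    (F := fun τ y => NN d p τ y * (r1 d p τ i y * r1 d p τ j y))
    (F' := fun τ y => NN d p τ y * ∑ k, Lk d p τ i j k y)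
    (bound := fun y => K * env d p τ₀ y) (x₀ := τ₀)
    (s := Set.Icc (τ₀ / 2) (2 * τ₀)) (Icc_mem_nhds (by linarith) (by linarith))
    (Filter.Eventually.of_forall fun τ => ((hs τ).mul ((br_sm (good_x i).cont τ).mul
      (br_sm (good_x j).cont τ))).aestronglyMeasurable)
    ((bdd_rr h0 i j).int h0 (by norm_num))
    (((hs τ₀).mul (Finset.stronglyMeasurable_fun_sum _ fun k _ =>
      (bdd_L h0 i j k).meas)).aestronglyMeasurable)
    (Filter.Eventually.of_forall fun y τ hτ => h τ hτ y i j)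
    ((env_int h0).const_mul K)
    (Filter.Eventually.of_forall fun y τ hτ =>
      J_point (by linarith [hτ.1]) i j y)).2

lemma J_val {τ : ℝ} (hτ : 0 < τ) (i j : Fin d) :
    ∫ y, NN d p τ y * ∑ k, Lk d p τ i j k y =
      dl i j - (1 / τ ^ 2) * ∫ y, NN d p τ y * ∑ k, Cv d p τ i k y * Cv d p τ k j y := by
  have hsym : ∀ (i k : Fin d) y, Cv d p τ i k y = Cv d p τ k i y := by
    intro i k y
    simp only [Cv, r2]
    rw [mul_comm (r1 d p τ i y)]
    congr 2; ext w; ring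
  have hL := fun k => (bdd_L (p := p) hτ i j k).int hτ le_rfl
  have hE := fun k => (bdd_EE (p := p) hτ i j k).int hτ le_rfl
  have hD := fun k => (bdd_DD (p := p) hτ i j k).int hτ le_rfl
  have hC := fun i j => (bdd_C (p := p) hτ i j).int hτ (by norm_num)
  have hCC := fun k => ((bdd_C (p := p) hτ i k).mul hτ (bdd_C hτ k j)).int hτ (by norm_num)
  have hrr := fun i j => (bdd_rr (p := p) hτ i j).int hτ (by norm_num)
  have hG : ∀ k, ∫ y, NN d p τ y * Lk d p τ i j k y =
      (∫ y, NN d p τ y * EE d p τ i j k y) - ∫ y, NN d p τ y * DD d p τ i j k y := by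
    intro k
    have h := int_G_zero (p := p) hτ i j k
    have e : ∫ y, NN d p τ y * (Lk d p τ i j k y + DD d p τ i j k y - EE d p τ i j k y) =
      (∫ y, NN d p τ y * Lk d p τ i j k y) -
        ((∫ y, NN d p τ y * EE d p τ i j k y) - ∫ y, NN d p τ y * DD d p τ i j k y) := by
      have hED : Integrable (fun y => NN d p τ y * EE d p τ i j k y -
        NN d p τ y * DD d p τ i j k y) := (hE k).sub (hD k)
      rw [← integral_sub (hE k) (hD k), ← integral_sub (hL k) hED]
      congr 1; ext y; ring
    rw [e] at h
    linarith
  have hEv : ∀ k, ∫ y, NN d p τ y * EE d p τ i j k y =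
      (dl i k * JJ d p k j τ + dl j k * JJ d p k i τ) / τ := by
    intro k
    rw [JJ, JJ, ← integral_const_mul, ← integral_const_mul,
      ← integral_add ((hrr k j).const_mul _) ((hrr k i).const_mul _), ← integral_div]
    congr 1; ext y; simp only [EE]; ring
  have hDv : ∀ k, ∫ y, NN d p τ y * DD d p τ i j k y =
      dl i k * dl j k - dl i k * (∫ y, NN d p τ y * Cv d p τ k j y) / τ
        - dl j k * (∫ y, NN d p τ y * Cv d p τ i k y) / τ
        + (1 / τ ^ 2) * ∫ y, NN d p τ y * (Cv d p τ i k y * Cv d p τ k j y) := by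
    intro k
    have e : ∀ y, NN d p τ y * DD d p τ i j k y =
      dl i k * dl j k * NN d p τ y - dl i k * (NN d p τ y * Cv d p τ k j y) / τ
        - dl j k * (NN d p τ y * Cv d p τ i k y) / τ
        + (1 / τ ^ 2) * (NN d p τ y * (Cv d p τ i k y * Cv d p τ k j y)) := by
      intro y
      have := hsym j k y
      simp only [DD]
      rw [this]
      field_simp
      ring
    simp_rw [e]
    have i1 := (N_int (p := p) hτ).const_mul (dl i k * dl j k)
    have i2 := ((hC k j).const_mul (dl i k)).div_const τ
    have i3 := ((hC i k).const_mul (dl j k)).div_const τ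
    have i4 := (hCC k).const_mul (1 / τ ^ 2)
    have i12 : Integrable (fun y => dl i k * dl j k * NN d p τ y -
        dl i k * (NN d p τ y * Cv d p τ k j y) / τ) := i1.sub i2
    have i123 : Integrable (fun y => dl i k * dl j k * NN d p τ y -
        dl i k * (NN d p τ y * Cv d p τ k j y) / τ - dl j k * (NN d p τ y * Cv d p τ i k y) / τ) :=
      i12.sub i3
    rw [integral_add i123 i4, integral_sub i12 i3, integral_sub i1 i2,
      integral_const_mul, integral_div, integral_div, integral_const_mul, integral_const_mul,
      integral_const_mul, N_integral hτ, mul_one]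
  simp_rw [Finset.mul_sum]
  rw [integral_finsetSum _ (fun k _ => hL k), integral_finsetSum _ (fun k _ => hCC k)]
  simp_rw [hG, hEv, hDv, C_integral hτ]
  rw [Finset.sum_sub_distrib, Finset.sum_add_distrib, Finset.sum_sub_distrib,
    Finset.sum_sub_distrib, ← Finset.mul_sum, ← Finset.sum_div, Finset.sum_add_distrib,
    ← Finset.sum_div, ← Finset.sum_div]
  have hdl : ∀ (i : Fin d) (f : Fin d → ℝ), ∑ k, dl i k * f k = f i := by
    intro i f; simp [dl]
  simp_rw [hdl]
  have hJ : JJ d p j i τ = JJ d p i j τ := by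
    unfold JJ; congr 1; ext y; ring
  have hd1 : dl j i = dl i j := by simp [dl, eq_comm]
  rw [hJ, hd1]
  field_simp
  ring

/-- Dynamics in the variance parametrisation. -/
lemma C_deriv {τ₀ : ℝ} (h0 : 0 < τ₀) (i j : Fin d) :
    HasDerivAt (fun τ => ∫ y, NN d p τ y * Cv d p τ i j y)
      ((1 / τ₀ ^ 2) * ∫ y, NN d p τ₀ y * ∑ k, Cv d p τ₀ i k y * Cv d p τ₀ k j y) τ₀ := by
  have h1 : HasDerivAt (fun τ : ℝ => τ * dl i j - JJ d p i j τ) _ τ₀ :=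
    ((hasDerivAt_id τ₀).mul_const (dl i j)).sub (J_deriv (p := p) h0 i j)
  rw [J_val h0] at h1
  refine (h1.congr_deriv (by ring)).congr_of_eventuallyEq ?_
  filter_upwards [lt_mem_nhds h0] with s hs
  exact C_integral hs i j

end

section
variable {d : ℕ} {p : Measure (Euc d)} [IsProbabilityMeasure p]

/-- variance at time `t` -/
def vt (t : ℝ) : ℝ := exp (2 * t) - 1

lemma vt_pos {t : ℝ} (ht : 0 < t) : 0 < vt t := by
  unfold vt
  have : 1 < exp (2 * t) := one_lt_exp_iff.2 (by linarith)
  linarith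

lemma one_sub_exp (t : ℝ) : 1 - exp (-2 * t) = exp (-t) ^ 2 * vt t := by
  unfold vt
  have h1 : exp (-2 * t) = exp (-t) ^ 2 := by rw [← exp_nat_mul]; congr 1; push_cast; ring
  have h2 : exp (-t) ^ 2 * exp (2 * t) = 1 := by
    rw [← h1, ← exp_add]; simp
  rw [mul_sub, h2, h1, mul_one]

lemma weight_eq {t : ℝ} (ht : 0 < t) (x z : Euc d) :
    exp (-‖x - exp (-t) • z‖ ^ 2 / (2 * (1 - exp (-2 * t)))) =
      ((2 * π * vt t) ^ (-(d : ℝ) / 2))⁻¹ * kern d (vt t) (exp t • x - z) := by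
  have hv := vt_pos ht
  unfold kern
  rw [inv_mul_cancel_left₀ (by positivity)]
  have h : x - exp (-t) • z = exp (-t) • (exp t • x - z) := by
    rw [smul_sub, smul_smul, ← exp_add]; simp
  rw [h, norm_smul, one_sub_exp, mul_pow, norm_eq_abs, sq_abs]
  congr 1
  have := exp_pos (-t)
  field_simp

lemma post_mass {t : ℝ} (ht : 0 < t) (x : Euc d) :
    (p.withDensity fun z =>
      ENNReal.ofReal (exp (-‖x - exp (-t) • z‖ ^ 2 / (2 * (1 - exp (-2 * t)))))) Set.univ =
    ENNReal.ofReal (((2 * π * vt t) ^ (-(d : ℝ) / 2))⁻¹ * NN d p (vt t) (exp t • x)) := by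
  have hv := vt_pos ht
  rw [withDensity_apply _ MeasurableSet.univ, Measure.restrict_univ]
  simp_rw [weight_eq ht]
  have hi : Integrable (fun z => ((2 * π * vt t) ^ (-(d : ℝ) / 2))⁻¹ *
      kern d (vt t) (exp t • x - z)) p := by
    have := good_one.good4.int (p := p) hv (exp t • x)
    simp only [one_mul] at this
    exact this.const_mul _
  rw [← ofReal_integral_eq_lintegral_ofReal hi (Filter.Eventually.of_forall fun z => by
      have := (kern_pos d hv (exp t • x - z)).le
      positivity), integral_const_mul]
  simp [NN, A]

lemma post_integrable {t : ℝ} (ht : 0 < t) (x : Euc d) {g : Euc d → ℝ} (hg : Good4 g) :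
    Integrable (fun z => g (exp t • x - z)) (posterior d p t x) := by
  have hv := vt_pos ht
  have hN := N_pos (p := p) hv (exp t • x)
  unfold posterior
  rw [post_mass ht]
  apply Integrable.smul_measure
  · rw [integrable_withDensity_iff_integrable_smul' (by fun_prop) (by simp)]
    refine ((hg.int (p := p) hv (exp t • x)).const_mul
      (((2 * π * vt t) ^ (-(d : ℝ) / 2))⁻¹)).congr (Filter.Eventually.of_forall fun z => ?_)
    simp only []
    rw [ENNReal.toReal_ofReal (exp_pos _).le, weight_eq ht, smul_eq_mul]
    ring
  · rw [ENNReal.inv_ne_top]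
    simp only [ne_eq, ENNReal.ofReal_eq_zero, not_le]
    positivity

lemma post_integral {t : ℝ} (ht : 0 < t) (x : Euc d) (g : Euc d → ℝ) :
    ∫ z, g (exp t • x - z) ∂(posterior d p t x) = br d p (vt t) g (exp t • x) := by
  have hv := vt_pos ht
  have hN := N_pos (p := p) hv (exp t • x)
  unfold posterior
  rw [post_mass ht, integral_smul_measure, integral_withDensity_eq_integral_toReal_smul
    (by fun_prop) (by simp)]
  simp_rw [ENNReal.toReal_ofReal (exp_pos _).le, weight_eq ht, smul_eq_mul, mul_assoc]
  rw [integral_const_mul, ENNReal.toReal_inv, ENNReal.toReal_ofReal (by positivity)]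
  unfold br A
  simp_rw [mul_comm (kern _ _ _)]
  have : 0 < (2 * π * vt t) ^ (-(d : ℝ) / 2) := by positivity
  unfold NN A at *
  field_simp

lemma post_prob {t : ℝ} (ht : 0 < t) (x : Euc d) : IsProbabilityMeasure (posterior d p t x) := by
  have hv := vt_pos ht
  have hN := N_pos (p := p) hv (exp t • x)
  constructor
  unfold posterior
  rw [Measure.smul_apply, post_mass ht, smul_eq_mul]
  apply ENNReal.inv_mul_cancel
  · simp only [ne_eq, ENNReal.ofReal_eq_zero, not_le]; positivity
  · simp

lemma post_mean {t : ℝ} (ht : 0 < t) (x : Euc d) (i : Fin d) :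
    postMean d p t x i = (exp t • x) i - r1 d p (vt t) i (exp t • x) := by
  haveI := post_prob (p := p) ht x
  have hi : ∀ i, Integrable (fun z : Euc d => z i) (posterior d p t x) := by
    intro i
    have := (integrable_const ((exp t • x) i)).sub (post_integrable (p := p) ht x (good_x i).good4)
    refine this.congr (Filter.Eventually.of_forall fun z => ?_)
    simp
  unfold postMean
  rw [eval_integral_piLp hi, r1, ← post_integral ht x (fun w => w i)]
  have e : ∫ z, ((exp t • x) i - (exp t • x - z) i) ∂(posterior d p t x) =
      (exp t • x) i - ∫ z, (exp t • x - z) i ∂(posterior d p t x) := by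
    rw [integral_sub (integrable_const _) (post_integrable (p := p) ht x (good_x i).good4)]
    simp
  rw [← e]
  congr 1; ext z; simp

lemma post_cov {t : ℝ} (ht : 0 < t) (x : Euc d) (i j : Fin d) :
    postCov d p t x i j = Cv d p (vt t) i j (exp t • x) := by
  haveI := post_prob (p := p) ht x
  unfold postCov
  rw [Matrix.of_apply]
  simp_rw [post_mean (p := p) ht x]
  set y := exp t • x with hy
  set a := r1 d p (vt t) i y with ha
  set b := r1 d p (vt t) j y with hb
  have e : ∀ z : Euc d, (z i - (y i - a)) * (z j - (y j - b)) =
      (y - z) i * (y - z) j - a * (y - z) j - b * (y - z) i + a * b := by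
    intro z; simp only [PiLp.sub_apply]; ring
  simp_rw [e]
  have i1 := post_integrable (p := p) ht x (good_xx i j).good4
  have i2 := (post_integrable (p := p) ht x (good_x j).good4).const_mul a
  have i3 := (post_integrable (p := p) ht x (good_x i).good4).const_mul b
  rw [← hy] at i1 i2 i3
  have i12 : Integrable (fun z => (y - z) i * (y - z) j - a * (y - z) j) (posterior d p t x) :=
    i1.sub i2
  have i123 : Integrable (fun z => (y - z) i * (y - z) j - a * (y - z) j - b * (y - z) i)
    (posterior d p t x) := i12.sub i3
  rw [integral_add i123 (integrable_const _), integral_sub i12 i3, integral_sub i1 i2,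
    integral_const_mul, integral_const_mul]
  have k1 := post_integral (p := p) ht x (fun w => w i * w j)
  have k2 := post_integral (p := p) ht x (fun w => w i)
  have k3 := post_integral (p := p) ht x (fun w => w j)
  rw [← hy] at k1 k2 k3
  simp only [] at k1 k2 k3
  rw [k1, k2, k3]
  simp only [Cv, integral_const, probReal_univ, smul_eq_mul, one_mul]
  rw [← ha, ← hb]
  simp only [r1, r2] at *
  rw [← ha, ← hb]
  ring

lemma lint_scale (b : ℝ) (hb : 0 < b) (h : Euc d → ℝ≥0∞) (hh : Measurable h) :
    ∫⁻ z, h (b • z) = ENNReal.ofReal ((b ^ d)⁻¹) * ∫⁻ v, h v := by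
  have := Measure.map_addHaar_smul (volume : Measure (Euc d)) hb.ne'
  rw [← lintegral_map (f := h) (g := fun z => b • z) hh (by fun_prop), this, lintegral_smul_measure,
    finrank_euclideanSpace, Fintype.card_fin, abs_of_pos (by positivity), smul_eq_mul]

lemma gauss_shift {τ : ℝ} (hτ : 0 < τ) (x : Euc d) (f : Euc d → ℝ≥0∞) (hf : Measurable f) :
    ∫⁻ z, f (x + √τ • z) ∂(stdGaussian d) = ∫⁻ y, f y * ENNReal.ofReal (kern d τ (y - x)) := by
  have hb : 0 < √τ := sqrt_pos.2 hτ
  have hk : Measurable (kern d τ) := (kern_cont d τ).measurable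
  unfold stdGaussian
  rw [lintegral_withDensity_eq_lintegral_mul _ (by fun_prop) (by fun_prop)]
  have e : ∀ z : Euc d, ((fun x : Euc d => ENNReal.ofReal ((2 * π) ^ (-(d : ℝ) / 2) *
      exp (-‖x‖ ^ 2 / 2))) * fun z => f (x + √τ • z)) z =
      (fun v => f (x + v) * (ENNReal.ofReal (√τ ^ d) * ENNReal.ofReal (kern d τ v))) (√τ • z) := by
    intro z
    simp only [Pi.mul_apply]
    rw [mul_comm, ← ENNReal.ofReal_mul (by positivity)]
    congr 2
    unfold kern
    rw [norm_smul, norm_eq_abs, abs_of_pos hb, mul_pow, sq_sqrt hτ.le, ← mul_assoc,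
      mul_rpow (x := 2 * π) (by positivity) hτ.le]
    have h1 : √τ ^ d * τ ^ (-(d : ℝ) / 2) = 1 := by
      rw [sqrt_eq_rpow, ← rpow_natCast, ← rpow_mul hτ.le, ← rpow_add hτ]
      have : 1 / 2 * (d : ℝ) + -(d : ℝ) / 2 = 0 := by ring
      rw [this, rpow_zero]
    have h2 : -(τ * ‖z‖ ^ 2) / (2 * τ) = -‖z‖ ^ 2 / 2 := by field_simp
    rw [h2]
    calc _ = (√τ ^ d * τ ^ (-(d : ℝ) / 2)) * ((2 * π) ^ (-(d : ℝ) / 2) * exp (-‖z‖ ^ 2 / 2)) := by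
          rw [h1, one_mul]
      _ = _ := by ring
  simp_rw [e]
  rw [lint_scale _ hb (fun v => f (x + v) * (ENNReal.ofReal (√τ ^ d) * ENNReal.ofReal (kern d τ v)))
    (by fun_prop)]
  rw [← lintegral_const_mul _ (by fun_prop)]
  rw [← lintegral_sub_right_eq_self _ x]
  congr 1; ext y
  rw [add_sub_cancel, mul_left_comm, ← mul_assoc (ENNReal.ofReal (√τ ^ d)⁻¹),
    ← ENNReal.ofReal_mul (by positivity), inv_mul_cancel₀ (by positivity), ENNReal.ofReal_one,
    one_mul]

lemma ou_map {t : ℝ} (ht : 0 < t) :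
    (ouMarginal d p t).map (fun x => exp t • x) =
      volume.withDensity (fun y => ENNReal.ofReal (NN d p (vt t) y)) := by
  have hv := vt_pos ht
  have hk : Measurable (kern d (vt t)) := (kern_cont d _).measurable
  haveI : SFinite (stdGaussian d) := by unfold stdGaussian; infer_instance
  have hNm : Measurable (NN d p (vt t)) := (A_sm continuous_const _).measurable
  refine Measure.ext_of_lintegral _ fun f hf => ?_
  unfold ouMarginal
  rw [Measure.map_map (by fun_prop) (by fun_prop), lintegral_map hf (by fun_prop),
    lintegral_prod _ (by fun_prop)]
  have e : ∀ x z : Euc d, ((fun x => exp t • x) ∘ fun xz : Euc d × Euc d =>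
      exp (-t) • xz.1 + √(1 - exp (-2 * t)) • xz.2) (x, z) = x + √(vt t) • z := by
    intro x z
    simp only [Function.comp]
    rw [one_sub_exp, sqrt_mul (by positivity), sqrt_sq (exp_pos _).le, smul_add, smul_smul,
      smul_smul, ← mul_assoc, ← exp_add]
    simp
  simp_rw [e, gauss_shift hv _ f hf]
  rw [lintegral_lintegral_swap (by fun_prop),
    lintegral_withDensity_eq_lintegral_mul _ (by fun_prop) hf]
  congr 1; ext y
  rw [lintegral_const_mul _ (by fun_prop), Pi.mul_apply, mul_comm]
  congr 1
  have hi := good_one.good4.int (p := p) hv y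
  simp only [one_mul] at hi
  rw [← ofReal_integral_eq_lintegral_ofReal hi (Filter.Eventually.of_forall fun z =>
    (kern_pos d hv _).le)]
  simp [NN, A]

lemma ou_integral {t : ℝ} (ht : 0 < t) {F : Euc d → ℝ} (hF : StronglyMeasurable F) :
    ∫ x, F (exp t • x) ∂(ouMarginal d p t) = ∫ y, NN d p (vt t) y * F y := by
  have hv := vt_pos ht
  have hNm : Measurable (NN d p (vt t)) := (A_sm continuous_const _).measurable
  rw [← integral_map (φ := fun x => exp t • x) (by fun_prop) hF.aestronglyMeasurable, ou_map ht,
    integral_withDensity_eq_integral_toReal_smul (by fun_prop) (by simp)]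
  congr 1; ext y
  rw [ENNReal.toReal_ofReal (N_pos hv y).le, smul_eq_mul]

end

end PCD

/-- **Proposition B.2 (stochastic-localization dynamics of the posterior covariance).**
The matrix-valued map `t ↦ E_{x ∼ p_t}[Σ_t(x)]` is differentiable on `(0, ∞)` (entrywise)
with derivative `(2 e^{-2t}/(1 - e^{-2t})²) E_{x ∼ p_t}[Σ_t(x)²]`. -/
theorem posterior_covariance_dynamics
    (d : ℕ) (hd : 1 ≤ d) (V : Euc d → ℝ) (hV : Measurable V)
    (p : Measure (Euc d)) (hprob : IsProbabilityMeasure p)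
    (hp : p = ((gibbs d V) Set.univ)⁻¹ • gibbs d V)
    (hm2 : Integrable (fun x => ‖x‖ ^ 2) p) :
    ∀ t : ℝ, 0 < t → ∀ i j : Fin d,
      HasDerivAt (fun u => ∫ x, postCov d p u x i j ∂(ouMarginal d p u))
        (2 * exp (-2 * t) / (1 - exp (-2 * t)) ^ 2 *
          ∫ x, (postCov d p t x * postCov d p t x) i j ∂(ouMarginal d p t)) t := by
  intro t ht i j
  have hv := PCD.vt_pos ht
  have hd1 : HasDerivAt PCD.vt (2 * exp (2 * t)) t := by
    have h : HasDerivAt (fun t : ℝ => 2 * t) 2 t := by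
      simpa using (hasDerivAt_id t).const_mul 2
    exact (h.exp.sub_const 1).congr_deriv (by ring)
  have h := (PCD.C_deriv (p := p) hv i j).comp t hd1
  have e2 : ∫ x, (postCov d p t x * postCov d p t x) i j ∂(ouMarginal d p t) =
      ∫ y, PCD.NN d p (PCD.vt t) y *
        ∑ k, PCD.Cv d p (PCD.vt t) i k y * PCD.Cv d p (PCD.vt t) k j y := by
    have hF : StronglyMeasurable (fun y => ∑ k, PCD.Cv d p (PCD.vt t) i k y *
        PCD.Cv d p (PCD.vt t) k j y) :=
      Finset.stronglyMeasurable_fun_sum _ fun k _ =>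
        (PCD.bdd_C (p := p) hv i k).meas.mul (PCD.bdd_C (p := p) hv k j).meas
    rw [← PCD.ou_integral (p := p) ht hF]
    simp_rw [Matrix.mul_apply, PCD.post_cov ht]
  rw [e2]
  refine (h.congr_deriv ?_).congr_of_eventuallyEq ?_
  · rw [PCD.one_sub_exp]
    have h1 : exp (-2 * t) = exp (-t) ^ 2 := by rw [← exp_nat_mul]; congr 1; push_cast; ring
    have h2 : exp (2 * t) = (exp (-t) ^ 2)⁻¹ := by rw [← h1, ← exp_neg]; congr 1; ring
    rw [h1, h2]
    have := exp_pos (-t)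
    field_simp
  · filter_upwards [lt_mem_nhds ht] with s hs
    have hvs := PCD.vt_pos hs
    simp only [Function.comp]
    rw [← PCD.ou_integral hs (PCD.bdd_C hvs i j).meas]
    simp_rw [PCD.post_cov hs]
end
end

section
/- (Cross-correlation identity for scores along the OU process, proved inside Lemma B.4.) Let 0 < u < v and let (X_u, X_v) have the joint law of the forward OU process at times u < v, i.e. X_u ∼ p_u and X_v = e^{−(v−u)} X_u + √(1 − e^{−2(v−u)}} ) Z with Z ∼ γ^d independent of X_u. Then, assuming the expectations below are finite, E[⟨∇ ln p_u(X_u), ∇ ln p_v(X_v)⟩] = e^{−(v−u)} E[‖∇ ln p_v(X_v)‖²]. -/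
open MeasureTheory Real
open scoped ENNReal RealInnerProductSpace

noncomputable section

/-- The joint law of `(X_u, X_v)` for the forward OU process at times `u < v`:
`X_u ∼ p_u` and `X_v = e^{-(v-u)} X_u + √(1 - e^{-2(v-u)}) Z`, `Z ∼ γ^d` independent. -/
def jointOU (d : ℕ) (p : Measure (Euc d)) (u v : ℝ) : Measure (Euc d × Euc d) :=
  ((ouMarginal d p u).prod (stdGaussian d)).map fun xz =>
    (xz.1, exp (-(v - u)) • xz.1 + Real.sqrt (1 - exp (-2 * (v - u))) • xz.2)

/-- Isotropic Gaussian kernel with variance `r`. -/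
def gk (d : ℕ) (r : ℝ) (x : Euc d) : ℝ :=
  (2 * π * r) ^ (-(d : ℝ) / 2) * exp (-‖x‖ ^ 2 / (2 * r))

/-- Gradient of the Gaussian kernel. -/
def dgk (d : ℕ) (r : ℝ) (x : Euc d) : Euc d := (-(gk d r x / r)) • x

lemma gk_pos {d : ℕ} {r : ℝ} (hr : 0 < r) (x : Euc d) : 0 < gk d r x := by
  unfold gk; positivity

lemma gk_cont (d : ℕ) (r : ℝ) : Continuous (gk d r) := by
  unfold gk; fun_prop

lemma dgk_cont (d : ℕ) (r : ℝ) : Continuous (dgk d r) := by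
  have := gk_cont d r
  unfold dgk; fun_prop

lemma gk_le {d : ℕ} {r : ℝ} (hr : 0 < r) (x : Euc d) :
    gk d r x ≤ (2 * π * r) ^ (-(d : ℝ) / 2) := by
  unfold gk
  have h : exp (-‖x‖ ^ 2 / (2 * r)) ≤ 1 := by
    rw [exp_le_one_iff, neg_div]
    have : 0 ≤ ‖x‖ ^ 2 / (2 * r) := by positivity
    linarith
  have h2 : 0 ≤ (2 * π * r) ^ (-(d : ℝ) / 2) := by positivity
  nlinarith

lemma gk_integral {d : ℕ} {r : ℝ} (hr : 0 < r) : ∫ x, gk d r x = 1 := by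
  unfold gk
  rw [integral_const_mul]
  have h := GaussianFourier.integral_rexp_neg_mul_sq_norm (V := Euc d)
    (b := 1 / (2 * r)) (by positivity)
  have e : (fun v : Euc d => rexp (-(1 / (2 * r)) * ‖v‖ ^ 2))
      = fun v => exp (-‖v‖ ^ 2 / (2 * r)) := by
    ext v; congr 1; ring
  rw [e] at h
  rw [h]
  have : π / (1 / (2 * r)) = 2 * π * r := by field_simp
  rw [this, finrank_euclideanSpace_fin, ← rpow_add (by positivity)]
  rw [show -(d : ℝ) / 2 + d / 2 = 0 by ring, rpow_zero]

lemma gk_integrable {d : ℕ} {r : ℝ} (hr : 0 < r) : Integrable (gk d r) := by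
  by_contra h
  have := gk_integral (d := d) hr
  rw [integral_undef h] at this
  simp at this

lemma dgk_norm {d : ℕ} {r : ℝ} (hr : 0 < r) (x : Euc d) :
    ‖dgk d r x‖ = gk d r x / r * ‖x‖ := by
  have := gk_pos hr x
  rw [dgk, norm_smul, norm_neg, Real.norm_of_nonneg (by positivity)]

lemma dgk_bound {d : ℕ} {r : ℝ} (hr : 0 < r) :
    ∃ C, 0 ≤ C ∧ ∀ x : Euc d, ‖dgk d r x‖ ≤ C * gk d (2 * r) x := by
  set A := (2 * π * r) ^ (-(d : ℝ) / 2) with hA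
  set B := (2 * π * (2 * r)) ^ (-(d : ℝ) / 2) with hB
  have hA0 : 0 < A := by positivity
  have hB0 : 0 < B := by positivity
  refine ⟨A / B / r * (1 + 4 * r), by positivity, fun x => ?_⟩
  rw [dgk_norm hr, gk, gk, ← hA, ← hB]
  have h1 : exp (-‖x‖ ^ 2 / (2 * r)) =
      exp (-‖x‖ ^ 2 / (2 * (2 * r))) * exp (-(‖x‖ ^ 2 / (4 * r))) := by
    rw [← exp_add]; congr 1; field_simp; ring
  have h2 : ‖x‖ ≤ (1 + 4 * r) * exp (‖x‖ ^ 2 / (4 * r)) := by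
    have h3 := add_one_le_exp (‖x‖ ^ 2 / (4 * r))
    have h4 : ‖x‖ ≤ (1 + 4 * r) * (‖x‖ ^ 2 / (4 * r) + 1) := by
      have : (1 + 4 * r) * (‖x‖ ^ 2 / (4 * r) + 1) =
        ‖x‖ ^ 2 / (4 * r) + ‖x‖ ^ 2 + 1 + 4 * r := by field_simp; ring
      rw [this]
      have : 0 ≤ ‖x‖ ^ 2 / (4 * r) := by positivity
      nlinarith [sq_nonneg (‖x‖ - 1)]
    exact h4.trans (by gcongr)
  have h5 : exp (-(‖x‖ ^ 2 / (4 * r))) * ‖x‖ ≤ 1 + 4 * r := by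
    rw [exp_neg, inv_mul_le_iff₀ (exp_pos _)]
    linarith
  rw [h1]
  calc A * (exp (-‖x‖ ^ 2 / (2 * (2 * r))) * exp (-(‖x‖ ^ 2 / (4 * r)))) / r * ‖x‖
      = A * exp (-‖x‖ ^ 2 / (2 * (2 * r))) / r * (exp (-(‖x‖ ^ 2 / (4 * r))) * ‖x‖) := by ring
    _ ≤ A * exp (-‖x‖ ^ 2 / (2 * (2 * r))) / r * (1 + 4 * r) := by gcongr
    _ = _ := by field_simp

lemma dgk_integrable {d : ℕ} {r : ℝ} (hr : 0 < r) : Integrable (dgk d r) := by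
  obtain ⟨C, -, hC⟩ := dgk_bound (d := d) hr
  exact ((gk_integrable (d := d) (r := 2 * r) (by positivity)).const_mul C).mono'
    (dgk_cont d r).aestronglyMeasurable (Filter.Eventually.of_forall hC)

lemma dgk_bdd {d : ℕ} {r : ℝ} (hr : 0 < r) : ∃ C, ∀ x : Euc d, ‖dgk d r x‖ ≤ C := by
  obtain ⟨C, h0, hC⟩ := dgk_bound (d := d) hr
  exact ⟨_, fun x => (hC x).trans (mul_le_mul_of_nonneg_left (gk_le (by positivity) x) h0)⟩

lemma gk_hasGradientAt {d : ℕ} (r : ℝ) (x : Euc d) :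
    HasGradientAt (gk d r) (dgk d r x) x := by
  rw [hasGradientAt_iff_hasFDerivAt]
  have h1 : HasFDerivAt (fun x : Euc d => ‖x‖ ^ 2) (2 • innerSL ℝ x) x :=
    (hasStrictFDerivAt_norm_sq x).hasFDerivAt
  have h2 : HasFDerivAt (gk d r) _ x :=
    ((h1.const_mul (-(2 * r)⁻¹)).exp).const_mul ((2 * π * r) ^ (-(d : ℝ) / 2)) |>.congr_of_eventuallyEq
    (Filter.Eventually.of_forall fun y => by
      simp only [gk]; congr 2; ring)
  refine h2.congr_fderiv ?_
  ext y
  simp [dgk, gk, innerSL_apply_apply]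
  rw [show -(r⁻¹ * 2⁻¹ * ‖x‖ ^ 2) = -‖x‖ ^ 2 / (2 * r) by ring]
  ring

lemma integral_id_gk {d : ℕ} {m : ℝ} (hm : 0 < m) (w : Euc d) :
    ∫ x, gk d m (x - w) • x = w := by
  have h1 : ∫ x : Euc d, gk d m (x - w) • x = ∫ x, gk d m x • (x + w) := by
    rw [← integral_sub_right_eq_self (fun x => gk d m x • (x + w)) w]
    simp
  have h0 : ∀ x : Euc d, gk d m x • x = (-m) • dgk d m x := by
    intro x; rw [dgk, smul_smul]; congr 1; field_simp
  have hi : Integrable (fun x : Euc d => gk d m x • x) := by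
    simp_rw [h0]; exact (dgk_integrable (d := d) hm).smul (-m)
  have hz : ∫ x : Euc d, gk d m x • x = 0 := by
    have h := integral_neg_eq_self (fun x : Euc d => gk d m x • x) volume
    have h' : (fun x : Euc d => gk d m (-x) • (-x)) = fun x => -(gk d m x • x) := by
      ext1 x; simp [gk]
    rw [h', integral_neg] at h
    have h2 : (2 : ℝ) • ∫ x : Euc d, gk d m x • x = 0 := by
      rw [two_smul]; nth_rewrite 1 [← h]; simp
    simpa using h2
  simp_rw [smul_add] at h1
  rw [h1, integral_add hi ((gk_integrable hm).smul_const w), hz, integral_smul_const,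
    gk_integral hm]
  simp

lemma gk_mul_gk {d : ℕ} {s t b : ℝ} (hs : 0 < s) (ht : 0 < t) (x y : Euc d) :
    gk d s x * gk d t (y - b • x) = gk d (t + b ^ 2 * s) y *
      gk d (s * t / (t + b ^ 2 * s)) (x - (b * s / (t + b ^ 2 * s)) • y) := by
  have hr : 0 < t + b ^ 2 * s := by positivity
  set r := t + b ^ 2 * s with hrdef
  simp only [gk]
  rw [mul_mul_mul_comm, mul_mul_mul_comm ((2 * π * r) ^ (-(d : ℝ) / 2)), ← exp_add, ← exp_add,
    ← mul_rpow (by positivity) (by positivity), ← mul_rpow (by positivity) (by positivity)]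
  congr 2
  · field_simp
  · rw [norm_sub_sq_real, norm_sub_sq_real, norm_smul, norm_smul, inner_smul_right,
      inner_smul_right, real_inner_comm x y, mul_pow, mul_pow]
    simp only [Real.norm_eq_abs, sq_abs]
    field_simp
    rw [hrdef]
    ring

lemma key_kernel {d : ℕ} {s t b : ℝ} (hs : 0 < s) (ht : 0 < t) (y : Euc d) :
    ∫ x, gk d t (y - b • x) • dgk d s x = b • dgk d (t + b ^ 2 * s) y := by
  have hr : 0 < t + b ^ 2 * s := by positivity
  have : ∀ x : Euc d, gk d t (y - b • x) • dgk d s x = (-(gk d (t + b ^ 2 * s) y / s)) •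
      (gk d (s * t / (t + b ^ 2 * s)) (x - (b * s / (t + b ^ 2 * s)) • y) • x) := by
    intro x
    rw [dgk, smul_smul, smul_smul]
    congr 1
    have := gk_mul_gk (b := b) hs ht x y
    rw [neg_mul, mul_neg, div_mul_eq_mul_div, ← this]
    ring
  simp_rw [this]
  rw [integral_smul, integral_id_gk (by positivity), dgk, smul_smul, smul_smul]
  congr 1
  field_simp

lemma gk_smooth_pos {d : ℕ} (p : Measure (Euc d)) [IsProbabilityMeasure p] {a r : ℝ} (hr : 0 < r)
    (x : Euc d) : 0 < ∫ z, gk d r (x - a • z) ∂p := by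
  have hc := gk_cont d r
  have hint : Integrable (fun z => gk d r (x - a • z)) p :=
    Integrable.of_bound (by fun_prop) ((2 * π * r) ^ (-(d : ℝ) / 2))
      (Filter.Eventually.of_forall fun z => by
        rw [Real.norm_of_nonneg (gk_pos hr _).le]; exact gk_le hr _)
  rw [integral_pos_iff_support_of_nonneg (fun z => (gk_pos hr _).le) hint]
  have : Function.support (fun z => gk d r (x - a • z)) = Set.univ := by
    ext z; simp [(gk_pos hr (x - a • z)).ne']
  rw [this]; simp

lemma gk_smooth_hasGradientAt {d : ℕ} (p : Measure (Euc d)) [IsProbabilityMeasure p] {a r : ℝ}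
    (hr : 0 < r) (x : Euc d) : HasGradientAt (fun x => ∫ z, gk d r (x - a • z) ∂p)
      (∫ z, dgk d r (x - a • z) ∂p) x := by
  have hc := gk_cont d r
  have hdc := dgk_cont d r
  obtain ⟨C, hC⟩ := dgk_bdd (d := d) hr
  rw [hasGradientAt_iff_hasFDerivAt]
  have e : (InnerProductSpace.toDual ℝ (Euc d)) (∫ z, dgk d r (x - a • z) ∂p)
      = ∫ z, (InnerProductSpace.toDual ℝ (Euc d)) (dgk d r (x - a • z)) ∂p :=
    ((InnerProductSpace.toDual ℝ (Euc d)).toContinuousLinearEquiv.integral_comp_comm _).symm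
  rw [e]
  refine hasFDerivAt_integral_of_dominated_of_fderiv_le (μ := p)
    (F := fun x z => gk d r (x - a • z))
    (F' := fun x z => (InnerProductSpace.toDual ℝ (Euc d)) (dgk d r (x - a • z)))
    (s := Set.univ) (bound := fun _ => C) Filter.univ_mem ?_ ?_ ?_ ?_ ?_ ?_
  · exact Filter.Eventually.of_forall fun x => by fun_prop
  · exact Integrable.of_bound (by fun_prop) ((2 * π * r) ^ (-(d : ℝ) / 2))
      (Filter.Eventually.of_forall fun z => by
        rw [Real.norm_of_nonneg (gk_pos hr _).le]; exact gk_le hr _)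
  · exact ((InnerProductSpace.toDual ℝ (Euc d)).continuous.comp
      (hdc.comp (by fun_prop : Continuous fun z : Euc d => x - a • z))).aestronglyMeasurable
  · refine Filter.Eventually.of_forall fun z x _ => ?_
    rw [LinearIsometryEquiv.norm_map]
    exact hC _
  · exact integrable_const _
  · refine Filter.Eventually.of_forall fun z x _ => ?_
    have h := (gk_hasGradientAt r (x - a • z)).hasFDerivAt
    exact h.comp x ((hasFDerivAt_id x).sub_const (a • z))

lemma dgk_prod_integrable {d : ℕ} (p : Measure (Euc d)) [IsProbabilityMeasure p] {a r : ℝ}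
    (hr : 0 < r) :
    Integrable (fun w : Euc d × Euc d => dgk d r (w.1 - a • w.2)) (volume.prod p) := by
  have hdc := dgk_cont d r
  rw [integrable_prod_iff' (by fun_prop)]
  constructor
  · exact Filter.Eventually.of_forall fun z => (dgk_integrable hr).comp_sub_right (a • z)
  · have : (fun z : Euc d => ∫ x : Euc d, ‖dgk d r (x - a • z)‖) = fun z => ∫ x : Euc d, ‖dgk d r x‖ := by
      ext z
      exact integral_sub_right_eq_self (fun x => ‖dgk d r x‖) (a • z)
    simp only [this]
    exact integrable_const _

lemma key_smooth {d : ℕ} (p : Measure (Euc d)) [IsProbabilityMeasure p] {a b r t : ℝ}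
    (hr : 0 < r) (ht : 0 < t) (y : Euc d) :
    Integrable (fun x => gk d t (y - b • x) • ∫ z, dgk d r (x - a • z) ∂p) ∧
    ∫ x, gk d t (y - b • x) • ∫ z, dgk d r (x - a • z) ∂p =
      b • ∫ z, dgk d (t + b ^ 2 * r) (y - (b * a) • z) ∂p := by
  have hc := gk_cont d t
  have hdc := dgk_cont d r
  have hI : Integrable (fun w : Euc d × Euc d =>
      gk d t (y - b • w.1) • dgk d r (w.1 - a • w.2)) (volume.prod p) :=
    (dgk_prod_integrable p (a := a) hr).bdd_smul (φ := fun w : Euc d × Euc d => gk d t (y - b • w.1))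
      ((2 * π * t) ^ (-(d : ℝ) / 2))
      (by fun_prop)
      (Filter.Eventually.of_forall fun z => by
        rw [Real.norm_of_nonneg (gk_pos ht _).le]; exact gk_le ht _)
  have e : ∀ x : Euc d, gk d t (y - b • x) • ∫ z, dgk d r (x - a • z) ∂p
      = ∫ z, gk d t (y - b • x) • dgk d r (x - a • z) ∂p := fun x => (integral_smul _ _).symm
  simp_rw [e]
  refine ⟨hI.integral_prod_left, ?_⟩
  rw [integral_integral_swap (f := fun x z => gk d t (y - b • x) • dgk d r (x - a • z)) hI,
    ← integral_smul]
  congr 1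
  ext1 z
  rw [← integral_add_right_eq_self _ (a • z)]
  have := key_kernel (b := b) hr ht (y - (b * a) • z)
  rw [← this]
  congr 1
  ext1 x
  rw [add_sub_cancel_right]
  congr 2
  rw [smul_add, smul_smul]; abel

lemma stdGaussian_eq (d : ℕ) :
    stdGaussian d = volume.withDensity fun x => ENNReal.ofReal (gk d 1 x) := by
  unfold stdGaussian gk
  simp

instance stdGaussian_prob (d : ℕ) : IsProbabilityMeasure (stdGaussian d) := by
  constructor
  rw [stdGaussian_eq, withDensity_apply _ MeasurableSet.univ, Measure.restrict_univ,
    ← ofReal_integral_eq_lintegral_ofReal (gk_integrable one_pos)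
      (Filter.Eventually.of_forall fun x => (gk_pos one_pos x).le), gk_integral one_pos]
  simp

lemma gk_scale {d : ℕ} {r : ℝ} (hr : 0 < r) (y : Euc d) :
    gk d r y = |(√r ^ d)⁻¹| * gk d 1 ((√r)⁻¹ • y) := by
  have hs : 0 < √r := sqrt_pos.mpr hr
  rw [abs_of_pos (by positivity), gk, gk, norm_smul, ← mul_assoc]
  congr 1
  · rw [mul_rpow (by positivity) hr.le, mul_one, mul_comm]
    congr 1
    rw [← rpow_natCast, ← rpow_neg hs.le, sqrt_eq_rpow, ← rpow_mul hr.le]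
    congr 1; ring
  · congr 1
    rw [norm_inv, Real.norm_of_nonneg hs.le, mul_pow, inv_pow, sq_sqrt hr.le]
    field_simp

lemma lintegral_stdGaussian_scale {d : ℕ} {r : ℝ} (hr : 0 < r) {h : Euc d → ℝ≥0∞}
    (hh : Measurable h) :
    ∫⁻ z, h (√r • z) ∂(stdGaussian d) = ∫⁻ y, ENNReal.ofReal (gk d r y) * h y := by
  have hs : √r ≠ 0 := (sqrt_pos.mpr hr).ne'
  have hm : Measurable fun x => ENNReal.ofReal (gk d 1 x) :=
    (gk_cont d 1).measurable.ennreal_ofReal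
  rw [stdGaussian_eq, lintegral_withDensity_eq_lintegral_mul _ hm (by fun_prop)]
  have hg := (gk_cont d 1).measurable
  have h1 := Measure.map_addHaar_smul (volume : Measure (Euc d)) hs
  have h2 : ∫⁻ y, ENNReal.ofReal (gk d 1 ((√r)⁻¹ • y)) * h y
        ∂(Measure.map (√r • ·) (volume : Measure (Euc d)))
      = ∫⁻ z, ENNReal.ofReal (gk d 1 z) * h (√r • z) := by
    rw [lintegral_map (by fun_prop) (by fun_prop)]
    congr 1; ext1 z
    rw [inv_smul_smul₀ hs]
  rw [h1, lintegral_smul_measure, finrank_euclideanSpace_fin] at h2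
  simp only [Pi.mul_apply]
  rw [← h2, smul_eq_mul, ← lintegral_const_mul _ (by fun_prop)]
  congr 1; ext1 y
  rw [gk_scale hr, ENNReal.ofReal_mul (abs_nonneg _), mul_assoc]

lemma map_kernel {d : ℕ} (μ : Measure (Euc d)) [SFinite μ] {a r : ℝ} (hr : 0 < r) :
    (μ.prod (stdGaussian d)).map (fun xz => (xz.1, a • xz.1 + √r • xz.2)) =
      (μ.prod volume).withDensity (fun w => ENNReal.ofReal (gk d r (w.2 - a • w.1))) := by
  have hc := (gk_cont d r).measurable
  refine Measure.ext_of_lintegral _ fun f hf => ?_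
  rw [lintegral_map hf (by fun_prop), lintegral_withDensity_eq_lintegral_mul _ (by fun_prop) hf,
    lintegral_prod _ (by fun_prop), lintegral_prod _ (by fun_prop)]
  congr 1; ext1 x
  rw [lintegral_stdGaussian_scale (h := fun y => f (x, a • x + y)) hr (by fun_prop)]
  rw [← lintegral_sub_right_eq_self _ (a • x)]
  simp

lemma ouMarginal_eq {d : ℕ} (p : Measure (Euc d)) [IsProbabilityMeasure p] {t : ℝ} (ht : 0 < t) :
    ouMarginal d p t = volume.withDensity fun x => ENNReal.ofReal
      (∫ z, gk d (1 - exp (-2 * t)) (x - exp (-t) • z) ∂p) := by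
  have hr : 0 < 1 - exp (-2 * t) := by
    have : exp (-2 * t) < 1 := by rw [← Real.exp_zero]; exact Real.exp_lt_exp.mpr (by linarith)
    linarith
  set r := 1 - exp (-2 * t)
  set a := exp (-t)
  have hc := (gk_cont d r)
  have h0 : ouMarginal d p t = ((p.prod (stdGaussian d)).map
      (fun xz => (xz.1, a • xz.1 + √r • xz.2))).map Prod.snd := by
    rw [Measure.map_map (by fun_prop) (by fun_prop)]; rfl
  have hq : ∀ x : Euc d, ENNReal.ofReal (∫ z, gk d r (x - a • z) ∂p)
      = ∫⁻ z, ENNReal.ofReal (gk d r (x - a • z)) ∂p := by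
    intro x
    refine ofReal_integral_eq_lintegral_ofReal ?_ (Filter.Eventually.of_forall fun z => (gk_pos hr _).le)
    exact Integrable.of_bound (by fun_prop) ((2 * π * r) ^ (-(d : ℝ) / 2))
      (Filter.Eventually.of_forall fun z => by
        rw [Real.norm_of_nonneg (gk_pos hr _).le]; exact gk_le hr _)
  simp_rw [hq]
  rw [h0, map_kernel p hr]
  have hm : Measurable fun w : Euc d × Euc d => ENNReal.ofReal (gk d r (w.2 - a • w.1)) := by
    fun_prop
  have hm' : Measurable fun x : Euc d => ∫⁻ z, ENNReal.ofReal (gk d r (x - a • z)) ∂p :=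
    Measurable.lintegral_prod_left' hm
  refine Measure.ext_of_lintegral _ fun f hf => ?_
  rw [lintegral_map hf measurable_snd, lintegral_withDensity_eq_lintegral_mul _ hm (by fun_prop),
    lintegral_withDensity_eq_lintegral_mul _ hm' hf, lintegral_prod_symm' _ (by fun_prop)]
  congr 1; ext1 x
  simp only [Pi.mul_apply]
  rw [lintegral_mul_const _ (by fun_prop)]

lemma ouDensity_eq {d : ℕ} (p : Measure (Euc d)) (t : ℝ) (x : Euc d) :
    ouDensity d p t x = ∫ z, gk d (1 - exp (-2 * t)) (x - exp (-t) • z) ∂p := by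
  unfold ouDensity gk
  rw [integral_const_mul]

lemma score_eq {d : ℕ} (p : Measure (Euc d)) [IsProbabilityMeasure p] {t : ℝ} (ht : 0 < t)
    (x : Euc d) :
    ouDensity d p t x • score d p t x =
      ∫ z, dgk d (1 - exp (-2 * t)) (x - exp (-t) • z) ∂p := by
  have hr : 0 < 1 - exp (-2 * t) := by
    have : exp (-2 * t) < 1 := by rw [← Real.exp_zero]; exact Real.exp_lt_exp.mpr (by linarith)
    linarith
  have hpos := gk_smooth_pos p (a := exp (-t)) hr x
  have hg := (gk_smooth_hasGradientAt p (a := exp (-t)) hr x).hasFDerivAt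
  have h : HasGradientAt (fun y => Real.log (ouDensity d p t y))
      ((ouDensity d p t x)⁻¹ • ∫ z, dgk d (1 - exp (-2 * t)) (x - exp (-t) • z) ∂p) x := by
    simp_rw [ouDensity_eq]
    rw [hasGradientAt_iff_hasFDerivAt]
    refine (hg.log hpos.ne').congr_fderiv ?_
    ext y
    simp
  rw [score, h.gradient, smul_smul, ouDensity_eq, mul_inv_cancel₀ hpos.ne', one_smul]

/-- **Cross-correlation identity for scores along the OU process** (proved inside Lemma B.4):
for `0 < u < v`, under the joint law of `(X_u, X_v)`,
`E ⟨∇ ln p_u(X_u), ∇ ln p_v(X_v)⟩ = e^{-(v-u)} E ‖∇ ln p_v(X_v)‖²`,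
provided both expectations are finite. -/
theorem score_cross_correlation
    (d : ℕ) (hd : 1 ≤ d) (V : Euc d → ℝ) (hV : Measurable V)
    (p : Measure (Euc d)) (hprob : IsProbabilityMeasure p)
    (hp : p = ((gibbs d V) Set.univ)⁻¹ • gibbs d V)
    (hm2 : Integrable (fun x => ‖x‖ ^ 2) p)
    (u v : ℝ) (hu : 0 < u) (huv : u < v)
    (hint1 : Integrable (fun w : Euc d × Euc d =>
        ⟪score d p u w.1, score d p v w.2⟫) (jointOU d p u v))
    (hint2 : Integrable (fun x => ‖score d p v x‖ ^ 2) (ouMarginal d p v)) :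
    (∫ w, ⟪score d p u w.1, score d p v w.2⟫ ∂(jointOU d p u v)) =
      exp (-(v - u)) * ∫ x, ‖score d p v x‖ ^ 2 ∂(ouMarginal d p v) := by
  have hrt : ∀ t : ℝ, 0 < t → 0 < 1 - exp (-2 * t) := fun t ht => by
    have : exp (-2 * t) < 1 := by rw [← Real.exp_zero]; exact Real.exp_lt_exp.mpr (by linarith)
    linarith
  have hv : 0 < v := hu.trans huv
  have hru := hrt u hu
  have hrs := hrt (v - u) (sub_pos.mpr huv)
  have hcont : ∀ t : ℝ, 0 < t → Continuous (ouDensity d p t) := fun t ht => by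
    have : ouDensity d p t = fun x => ∫ z, gk d (1 - exp (-2 * t)) (x - exp (-t) • z) ∂p := by
      ext x; exact ouDensity_eq p t x
    rw [this]
    exact continuous_iff_continuousAt.mpr fun x =>
      (gk_smooth_hasGradientAt p (hrt t ht) x).continuousAt
  have hpos : ∀ t : ℝ, 0 < t → ∀ x, 0 < ouDensity d p t x := fun t ht x => by
    rw [ouDensity_eq]; exact gk_smooth_pos p (hrt t ht) x
  have hmarg : ∀ t : ℝ, 0 < t → ouMarginal d p t =
      volume.withDensity fun x => ENNReal.ofReal (ouDensity d p t x) := fun t ht => by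
    rw [ouMarginal_eq p ht]; simp_rw [ouDensity_eq]
  set b := exp (-(v - u)) with hb
  set r := 1 - exp (-2 * (v - u)) with hr
  have hcu := hcont u hu
  have hcv := hcont v hv
  have hgc := gk_cont d r
  have hjoint : jointOU d p u v = (volume.prod volume).withDensity fun w : Euc d × Euc d =>
      ENNReal.ofReal (ouDensity d p u w.1 * gk d r (w.2 - b • w.1)) := by
    have : SFinite (ouMarginal d p u) := by rw [hmarg u hu]; infer_instance
    have h1 : jointOU d p u v = ((ouMarginal d p u).prod volume).withDensity
        (fun w => ENNReal.ofReal (gk d r (w.2 - b • w.1))) := map_kernel _ hrs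
    rw [h1, hmarg u hu, prod_withDensity_left (by fun_prop), ← withDensity_mul _ (by fun_prop)
      (by fun_prop)]
    congr 1; ext1 w
    rw [Pi.mul_apply, ENNReal.ofReal_mul (hpos u hu _).le]
  have hKm : Measurable fun w : Euc d × Euc d =>
      ENNReal.ofReal (ouDensity d p u w.1 * gk d r (w.2 - b • w.1)) := by fun_prop
  have hKe : ∀ w : Euc d × Euc d,
      (ENNReal.ofReal (ouDensity d p u w.1 * gk d r (w.2 - b • w.1))).toReal •
        ⟪score d p u w.1, score d p v w.2⟫ =
      ⟪gk d r (w.2 - b • w.1) • ∫ z, dgk d (1 - exp (-2 * u)) (w.1 - exp (-u) • z) ∂p,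
        score d p v w.2⟫ := fun w => by
    rw [ENNReal.toReal_ofReal (mul_nonneg (hpos u hu _).le (gk_pos hrs _).le),
      ← score_eq p hu, smul_smul, real_inner_smul_left, smul_eq_mul]
    ring
  rw [hjoint] at hint1 ⊢
  rw [integrable_withDensity_iff_integrable_smul' hKm (by simp)] at hint1
  rw [integral_withDensity_eq_integral_toReal_smul hKm (by simp)]
  simp_rw [hKe] at hint1 ⊢
  rw [integral_prod_symm _ hint1, hmarg v hv,
    integral_withDensity_eq_integral_toReal_smul (by fun_prop) (by simp), ← integral_const_mul]
  congr 1; ext1 y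
  obtain ⟨hi, hk⟩ := key_smooth p (a := exp (-u)) (b := b) hru hrs y
  simp only
  have hin : ∀ x : Euc d, ⟪gk d r (y - b • x) •
      ∫ z, dgk d (1 - exp (-2 * u)) (x - exp (-u) • z) ∂p, score d p v y⟫ =
      ⟪score d p v y, gk d r (y - b • x) •
      ∫ z, dgk d (1 - exp (-2 * u)) (x - exp (-u) • z) ∂p⟫ := fun x => real_inner_comm _ _
  simp_rw [hin]
  rw [integral_inner hi, hk]
  have e1 : r + b ^ 2 * (1 - exp (-2 * u)) = 1 - exp (-2 * v) := by
    have h1 : b ^ 2 = exp (-2 * (v - u)) := by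
      rw [hb, ← exp_nat_mul]; push_cast; ring_nf
    have h2 : exp (-2 * (v - u)) * exp (-2 * u) = exp (-2 * v) := by
      rw [← exp_add]; ring_nf
    rw [hr, h1, ← h2]
    ring
  have e2 : b * exp (-u) = exp (-v) := by
    rw [hb, ← exp_add]; ring_nf
  rw [e1, e2, ← score_eq p hv, real_inner_smul_right, real_inner_smul_right,
    real_inner_self_eq_norm_sq, ENNReal.toReal_ofReal (hpos v hv y).le, smul_eq_mul]
end
end
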